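/- arXiv:1010.2795 — 2 statements merged into one kernel-verified Lean document; each statement's English description precedes it below -/
import Mathlib

section
/- Let M ≥ 1 and let a be smooth on a neighbourhood of the closed punctured unit disc D̄\{0} with e^{2a} ≤ Δa ≤ M e^{2a} there (Gauss curvature of g₀ = e^{2a}|dz|² in [−M,−1]), and suppose g₀ is complete at the origin. Then there exists a sequence of smooth functions u_k : D → ℝ, increasing in k (u_k ≤ u_{k+1} pointwise), such that: (i) u_k = a on D \ D_{1/k}; (ii) u_k ≤ a on D\{0}; (iii) inf_{D_{1/k}} u_k → ∞ as k → ∞; and (iv) there exists C < ∞, independent of k, with −e^{−2u_k}Δu_k ≥ −C on D for all k (the Gauss curvatures of the smooth metrics e^{2u_k}|dz|² on D are uniformly bounded below). -/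
open Complex Metric Set Filter

/-- The flat Laplacian of `u : ℂ → ℝ` at `z`, i.e. `∂²u/∂x² + ∂²u/∂y²`. -/
noncomputable def lap (u : ℂ → ℝ) (z : ℂ) : ℝ :=
  iteratedFDeriv ℝ 2 u z ![1, 1] + iteratedFDeriv ℝ 2 u z ![Complex.I, Complex.I]

/-! Capping `a` smoothly and concavely at height `m` costs at most a factor `e²` in the lower
curvature bound: the cap has nonpositive second derivative, and where its first derivative does not
vanish the capped function is at least `a - 1`. So everything follows once `a → ∞` at the origin. In
the coordinate `z = e ^ w` the conformal factor becomes `b w = a (e ^ w) + w.re`, which is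
`2πi`-periodic on the left half-plane and bounded above by the Ahlfors-Schwarz lemma, so that `Δ b`
is bounded too. The averages of `b` over vertical periods are then convex in `w.re`, and a Harnack
inequality compares them with `b` itself. As `w.re → -∞` a convex function either stays above a line
of any prescribed positive slope or stays below such a line. In the first case `a → ∞` at the
origin; in the second `a ≤ (δ - 1) * log ‖z‖ + C` with `δ > 0`, and then a ray into the origin has
finite length.
-/

open InnerProductSpace Laplacian MeasureTheory
open scoped Topology ContDiff

section SecondDerivative

variable {E F G : Type*} [NormedAddCommGroup E] [NormedSpace ℝ E] [NormedAddCommGroup F]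
  [NormedSpace ℝ F] [NormedAddCommGroup G] [NormedSpace ℝ G]

lemma differentiableAt_fderiv_of_contDiffAt_two {f : E → F} {x : E} (hf : ContDiffAt ℝ 2 f x) :
    DifferentiableAt ℝ (fderiv ℝ f) x :=
  (hf.fderiv_right (m := 1) (by norm_num)).differentiableAt (by norm_num)

lemma eventually_differentiableAt_of_contDiffAt_two {f : E → F} {x : E}
    (hf : ContDiffAt ℝ 2 f x) : ∀ᶠ y in 𝓝 x, DifferentiableAt ℝ f y :=
  (hf.eventually (by norm_num)).mono fun _ hy ↦ hy.differentiableAt (by norm_num)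

lemma hasDerivAt_fderiv_apply_comp {f : E → F} {l : ℝ → E} {s : ℝ} {v' : E} (v : E)
    (hf : ContDiffAt ℝ 2 f (l s)) (hl : HasDerivAt l v' s) :
    HasDerivAt (fun t ↦ fderiv ℝ f (l t) v) (fderiv ℝ (fderiv ℝ f) (l s) v' v) s := by
  have hD := (differentiableAt_fderiv_of_contDiffAt_two hf).hasFDerivAt.comp_hasDerivAt s hl
  simpa using hD.clm_apply (hasDerivAt_const s v)

lemma fderiv_fderiv_comp_apply {g : F → G} {f : E → F} {x : E} (hg : ContDiffAt ℝ 2 g (f x))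
    (hf : ContDiffAt ℝ 2 f x) (v w : E) :
    fderiv ℝ (fderiv ℝ (g ∘ f)) x v w =
      fderiv ℝ (fderiv ℝ g) (f x) (fderiv ℝ f x v) (fderiv ℝ f x w) +
        fderiv ℝ g (f x) (fderiv ℝ (fderiv ℝ f) x v w) := by
  have chain : fderiv ℝ (g ∘ f) =ᶠ[𝓝 x] fun y ↦ fderiv ℝ g (f y) ∘SL fderiv ℝ f y := by
    filter_upwards [eventually_differentiableAt_of_contDiffAt_two hf,
      hf.continuousAt.eventually (eventually_differentiableAt_of_contDiffAt_two hg)]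
      with y hfy hgy using fderiv_comp y hgy hfy
  have hD := ((differentiableAt_fderiv_of_contDiffAt_two hg).hasFDerivAt.comp x
    (hf.differentiableAt (by norm_num)).hasFDerivAt).clm_comp
      (differentiableAt_fderiv_of_contDiffAt_two hf).hasFDerivAt
  rw [chain.fderiv_eq]
  simp only [Function.comp_def] at hD
  rw [hD.fderiv]
  simp [add_comm]

lemma deriv_deriv_nonpos_of_isLocalMax {φ : ℝ → ℝ} {s : ℝ} (hφ : ContinuousAt φ s)
    (hmax : IsLocalMax φ s) : deriv (deriv φ) s ≤ 0 := by
  by_contra! hpos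
  have hmin := isLocalMin_of_deriv_deriv_pos hpos hmax.deriv_eq_zero hφ
  have hconst : φ =ᶠ[𝓝 s] fun _ ↦ φ s := by
    filter_upwards [hmin, hmax] with t h₁ h₂ using le_antisymm h₂ h₁
  simp [hconst.deriv.deriv_eq] at hpos

lemma fderiv_fderiv_nonpos_of_isLocalMax {h : E → ℝ} {x : E} (hh : ContDiffAt ℝ 2 h x)
    (hmax : IsLocalMax h x) (v : E) : fderiv ℝ (fderiv ℝ h) x v v ≤ 0 := by
  set l : ℝ → E := fun s ↦ x + s • v
  have hl (s : ℝ) : HasDerivAt l v s := by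
    simpa [l] using ((hasDerivAt_id s).smul_const v).const_add x
  have hl₀ : l 0 = x := by simp [l]
  have hlt : Tendsto l (𝓝 0) (𝓝 x) := by simpa only [hl₀] using (hl 0).continuousAt.tendsto
  rw [← hl₀] at hh
  have first : deriv (h ∘ l) =ᶠ[𝓝 0] fun s ↦ fderiv ℝ h (l s) v := by
    filter_upwards [(hl 0).continuousAt.eventually
      (eventually_differentiableAt_of_contDiffAt_two hh)] with s hs
    exact (hs.hasFDerivAt.comp_hasDerivAt s (hl s)).deriv
  have second : deriv (deriv (h ∘ l)) 0 = fderiv ℝ (fderiv ℝ h) x v v := by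
    rw [first.deriv_eq, (hasDerivAt_fderiv_apply_comp v hh (hl 0)).deriv, hl₀]
  rw [← second]
  refine deriv_deriv_nonpos_of_isLocalMax (hh.continuousAt.comp (hl 0).continuousAt) ?_
  filter_upwards [hlt.eventually hmax] with s hs
  simpa [hl₀] using hs

lemma fderiv_fderiv_apply_eq_deriv_deriv {f : ℝ → ℝ} {x : ℝ} (hf : ContDiffAt ℝ 2 f x)
    (s t : ℝ) : fderiv ℝ (fderiv ℝ f) x s t = s * t * deriv (deriv f) x := by
  have h := (hasDerivAt_fderiv_apply_comp t hf (hasDerivAt_id x)).deriv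
  simp only [id_eq, fderiv_eq_smul_deriv (f := f), smul_eq_mul, deriv_const_mul_field] at h
  calc fderiv ℝ (fderiv ℝ f) x s t = fderiv ℝ (fderiv ℝ f) x (s • 1) t := by simp
    _ = s * fderiv ℝ (fderiv ℝ f) x 1 t := by rw [map_smul, smul_apply, smul_eq_mul]
    _ = s * t * deriv (deriv f) x := by rw [← h, mul_assoc]

end SecondDerivative

section NormSq

variable {E : Type*} [NormedAddCommGroup E] [InnerProductSpace ℝ E]

lemma contDiff_norm_sub_sq (p : E) : ContDiff ℝ 2 fun x : E ↦ ‖x - p‖ ^ 2 :=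
  (contDiff_id.sub contDiff_const).norm_sq ℝ

lemma fderiv_norm_sub_sq (p x : E) :
    fderiv ℝ (fun x : E ↦ ‖x - p‖ ^ 2) x = (2 : ℝ) • innerSL ℝ (x - p) := by
  rw [fderiv_comp_sub (f := fun x ↦ ‖x‖ ^ 2), fderiv_norm_sq]
  simp [two_smul]

lemma fderiv_fderiv_norm_sub_sq (p x v w : E) :
    fderiv ℝ (fderiv ℝ fun x : E ↦ ‖x - p‖ ^ 2) x v w = 2 * inner ℝ v w := by
  have h : HasFDerivAt (fun x ↦ ((2 : ℝ) • innerSL ℝ (E := E)) (x - p)) ((2 : ℝ) • innerSL ℝ) x :=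
    ((2 : ℝ) • innerSL ℝ (E := E)).hasFDerivAt.comp x (hasFDerivAt_sub_const p)
  rw [funext (fderiv_norm_sub_sq p)]
  exact DFunLike.congr_fun (DFunLike.congr_fun h.fderiv v) w

end NormSq

section Laplacian

variable {E : Type*} [NormedAddCommGroup E] [InnerProductSpace ℝ E] [FiniteDimensional ℝ E]

lemma laplacian_eq_sum_fderiv_fderiv {ι : Type*} [Fintype ι] (b : OrthonormalBasis ι ℝ E)
    (u : E → ℝ) (x : E) : Δ u x = ∑ i, fderiv ℝ (fderiv ℝ u) x (b i) (b i) := by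
  simp [laplacian_eq_iteratedFDeriv_orthonormalBasis u b, iteratedFDeriv_two_apply]

lemma sum_sq_apply_orthonormalBasis {ι : Type*} [Fintype ι] (b : OrthonormalBasis ι ℝ E)
    (L : E →L[ℝ] ℝ) : ∑ i, L (b i) ^ 2 = ‖L‖ ^ 2 := by
  obtain ⟨x, rfl⟩ := (toDual ℝ E).surjective L
  simp [← b.sum_sq_norm_inner_left x]

lemma laplacian_comp_real {f : ℝ → ℝ} {u : E → ℝ} {x : E} (hf : ContDiffAt ℝ 2 f (u x))
    (hu : ContDiffAt ℝ 2 u x) :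
    Δ (fun y ↦ f (u y)) x =
      deriv f (u x) * Δ u x + deriv (deriv f) (u x) * ‖fderiv ℝ u x‖ ^ 2 := by
  set b := stdOrthonormalBasis ℝ E
  change Δ (f ∘ u) x = _
  simp only [laplacian_eq_sum_fderiv_fderiv b, fderiv_fderiv_comp_apply hf hu,
    fderiv_fderiv_apply_eq_deriv_deriv hf,
    ← sum_sq_apply_orthonormalBasis b, Finset.mul_sum, ← Finset.sum_add_distrib, ← sq]
  refine Finset.sum_congr rfl fun i _ ↦ ?_
  simp [add_comm, mul_comm]

lemma laplacian_nonpos_of_isLocalMax {h : E → ℝ} {x : E} (hh : ContDiffAt ℝ 2 h x)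
    (hmax : IsLocalMax h x) : Δ h x ≤ 0 := by
  rw [laplacian_eq_sum_fderiv_fderiv (stdOrthonormalBasis ℝ E)]
  exact Finset.sum_nonpos fun i _ ↦ fderiv_fderiv_nonpos_of_isLocalMax hh hmax _

lemma laplacian_norm_sub_sq (p x : E) :
    Δ (fun y ↦ ‖y - p‖ ^ 2) x = 2 * Module.finrank ℝ E := by
  simp [laplacian_eq_sum_fderiv_fderiv (stdOrthonormalBasis ℝ E), fderiv_fderiv_norm_sub_sq,
    mul_comm]

lemma lap_eq_laplacian (u : ℂ → ℝ) : lap u = Δ u :=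
  (laplacian_eq_iteratedFDeriv_complexPlane u).symm

lemma laplacian_eq_fderiv_fderiv {F : Type*} [NormedAddCommGroup F] [NormedSpace ℝ F]
    (u : ℂ → F) (z : ℂ) :
    Δ u z = fderiv ℝ (fderiv ℝ u) z 1 1 + fderiv ℝ (fderiv ℝ u) z I I := by
  simp [laplacian_eq_iteratedFDeriv_complexPlane, iteratedFDeriv_two_apply]

lemma laplacian_comp_analytic {u : ℂ → ℝ} {f : ℂ → ℂ} {w : ℂ} (hu : ContDiffAt ℝ 2 u (f w))
    (hf : AnalyticAt ℂ f w) : Δ (fun z ↦ u (f z)) w = ‖deriv f w‖ ^ 2 * Δ u (f w) := by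
  have hf₂ : ContDiffAt ℝ 2 f w := hf.contDiffAt.restrict_scalars ℝ
  have hf₁ (v : ℂ) : fderiv ℝ f w v = deriv f w * v := by
    rw [(hf.differentiableAt.hasDerivAt.hasFDerivAt.restrictScalars ℝ).fderiv]
    simp [mul_comm]
  have harm : fderiv ℝ (fderiv ℝ f) w I I = -fderiv ℝ (fderiv ℝ f) w 1 1 := by
    rw [eq_neg_iff_add_eq_zero, add_comm, ← laplacian_eq_fderiv_fderiv]
    exact hf.harmonicAt.2.eq_of_nhds
  change Δ (u ∘ f) w = _
  simp only [laplacian_eq_fderiv_fderiv, fderiv_fderiv_comp_apply hu hf₂, hf₁, harm, map_neg]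
  have h1 : deriv f w * 1 = (deriv f w).re • (1 : ℂ) + (deriv f w).im • I := by
    apply Complex.ext <;> simp
  have hI : deriv f w * I = -(deriv f w).im • (1 : ℂ) + (deriv f w).re • I := by
    apply Complex.ext <;> simp
  rw [h1, hI, ← normSq_eq_norm_sq, normSq_apply]
  simp only [map_add, map_smul, map_neg, neg_smul, add_apply, smul_apply, neg_apply, smul_eq_mul]
  ring

end Laplacian

section Ahlfors

lemma deriv_log_const_sub (c s : ℝ) : deriv (fun s ↦ Real.log (c - s)) s = -(c - s)⁻¹ := by
  rw [deriv_comp_const_sub, Real.deriv_log]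

lemma laplacian_log_sq_sub_norm_sub_sq {r : ℝ} {p w : ℂ} (hw : 0 < r ^ 2 - ‖w - p‖ ^ 2) :
    Δ (fun z ↦ Real.log (r ^ 2 - ‖z - p‖ ^ 2)) w = -(2 * r / (r ^ 2 - ‖w - p‖ ^ 2)) ^ 2 := by
  have hlog : ContDiffAt ℝ 2 (fun s ↦ Real.log (r ^ 2 - s)) (‖w - p‖ ^ 2) :=
    (contDiffAt_const.sub contDiffAt_id).log hw.ne'
  have h₂ : deriv (deriv fun s ↦ Real.log (r ^ 2 - s)) (‖w - p‖ ^ 2) =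
      -((r ^ 2 - ‖w - p‖ ^ 2) ^ 2)⁻¹ := by
    simp [funext (deriv_log_const_sub (r ^ 2)), deriv_comp_const_sub (f := fun s ↦ s⁻¹)]
  have hgrad : ‖fderiv ℝ (fun z : ℂ ↦ ‖z - p‖ ^ 2) w‖ = 2 * ‖w - p‖ := by
    rw [fderiv_norm_sub_sq, norm_smul, innerSL_apply_norm, Real.norm_ofNat]
  rw [laplacian_comp_real (u := fun z ↦ ‖z - p‖ ^ 2) hlog (contDiff_norm_sub_sq p).contDiffAt,
    deriv_log_const_sub, h₂, hgrad, laplacian_norm_sub_sq, Complex.finrank_real_complex]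
  field_simp
  push_cast
  ring

theorem exp_le_of_exp_le_laplacian {b : ℂ → ℝ} {p : ℂ} {r : ℝ} (hr : 0 < r)
    (hb : ContDiffOn ℝ 2 b (ball p r)) (hbc : ContinuousOn b (closedBall p r))
    (hΔ : ∀ w ∈ ball p r, Real.exp (2 * b w) ≤ Δ b w) : Real.exp (b p) ≤ 2 / r := by
  obtain ⟨w, -, hmax⟩ := (isCompact_closedBall p r).exists_isMaxOn ⟨p, mem_closedBall_self hr.le⟩
    (f := fun w ↦ (r ^ 2 - ‖w - p‖ ^ 2) * Real.exp (b w)) (by fun_prop)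
  set g : ℂ → ℝ := fun z ↦ r ^ 2 - ‖z - p‖ ^ 2
  have hpw : r ^ 2 * Real.exp (b p) ≤ g w * Real.exp (b w) := by
    simpa using hmax (mem_closedBall_self hr.le)
  have hgw : 0 < g w := pos_of_mul_pos_left ((by positivity : 0 < r ^ 2 * _).trans_le hpw)
    (Real.exp_pos _).le
  have hwr : w ∈ ball p r := by
    rw [mem_ball_iff_norm]
    exact lt_of_pow_lt_pow_left₀ 2 hr.le (sub_pos.1 hgw)
  have hgc : ContDiff ℝ 2 g := contDiff_const.sub (contDiff_norm_sub_sq p)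
  have hbw := hb.contDiffAt (isOpen_ball.mem_nhds hwr)
  have hlog : ContDiffAt ℝ 2 (fun z ↦ Real.log (g z)) w := hgc.contDiffAt.log hgw.ne'
  have hlocal : IsLocalMax ((fun z ↦ Real.log (g z)) + b) w := by
    filter_upwards [hgc.continuous.continuousAt.eventually (lt_mem_nhds hgw),
      isOpen_ball.mem_nhds hwr] with z hz hzr
    have hle : g z * Real.exp (b z) ≤ g w * Real.exp (b w) := hmax (ball_subset_closedBall hzr)
    simpa [Real.log_mul, hz.ne', hgw.ne', Real.exp_ne_zero] using
      Real.log_le_log (by positivity) hle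
  have hΔw : Δ b w ≤ (2 * r / g w) ^ 2 := by
    have hle : Δ ((fun z ↦ Real.log (g z)) + b) w ≤ 0 :=
      laplacian_nonpos_of_isLocalMax (hlog.add hbw) hlocal
    rw [hlog.laplacian_add hbw, laplacian_log_sq_sub_norm_sub_sq hgw] at hle
    linarith
  have hexp : Real.exp (b w) ≤ 2 * r / g w := by
    refine le_of_sq_le_sq ?_ (by positivity)
    rw [← Real.exp_nat_mul]
    exact (hΔ w hwr).trans hΔw
  rw [le_div_iff₀ hgw] at hexp
  rw [le_div_iff₀ hr]
  nlinarith

end Ahlfors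

section VerticalAverage

lemma hasDerivAt_ofReal_add_const (w : ℂ) (s : ℝ) : HasDerivAt (fun t : ℝ ↦ (t : ℂ) + w) 1 s :=
  Complex.ofRealCLM.hasDerivAt.add_const w

lemma hasDerivAt_const_add_ofReal_mul_I (w : ℂ) (s : ℝ) :
    HasDerivAt (fun t : ℝ ↦ w + t * I) I s := by
  simpa using (Complex.ofRealCLM.hasDerivAt.mul_const I).const_add w

lemma continuous_comp_verticalLine {g : ℂ → ℝ} {T t : ℝ} (hg : ContinuousOn g {w | w.re < T})
    (ht : t < T) : Continuous fun θ : ℝ ↦ g (t + θ * I) :=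
  hg.comp_continuous (by fun_prop) fun θ ↦ by simpa using ht

lemma hasDerivAt_integral_verticalLine {g g' : ℂ → ℝ} {P T t : ℝ} (ht : t < T)
    (hg : ContinuousOn g {w | w.re < T}) (hg' : ContinuousOn g' {w | w.re < T})
    (hd : ∀ s θ : ℝ, s < T → HasDerivAt (fun x : ℝ ↦ g (x + θ * I)) (g' (s + θ * I)) s) :
    HasDerivAt (fun s : ℝ ↦ ∫ θ in (0:ℝ)..P, g (s + θ * I))
      (∫ θ in (0:ℝ)..P, g' (t + θ * I)) t := by
  obtain ⟨t', htt', ht'T⟩ := exists_between ht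
  have hK : IsCompact (Icc (t - 1) t' ×ℂ uIcc 0 P) := isCompact_Icc.reProdIm isCompact_uIcc
  obtain ⟨C, hC⟩ := hK.exists_bound_of_continuousOn
    (hg'.mono fun w hw ↦ (Complex.mem_reProdIm.1 hw).1.2.trans_lt ht'T)
  refine (intervalIntegral.hasDerivAt_integral_of_dominated_loc_of_deriv_le (bound := fun _ ↦ C)
    (F := fun (s θ : ℝ) ↦ g (s + θ * I)) (F' := fun (s θ : ℝ) ↦ g' (s + θ * I))
    (Ioo_mem_nhds (by linarith : t - 1 < t) htt') ?_ ?_ ?_ ?_ intervalIntegrable_const ?_).2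
  · filter_upwards [Iio_mem_nhds ht] with s hs
    exact (continuous_comp_verticalLine hg hs).aestronglyMeasurable
  · exact (continuous_comp_verticalLine hg ht).intervalIntegrable _ _
  · exact (continuous_comp_verticalLine hg' ht).aestronglyMeasurable
  · refine .of_forall fun θ hθ s hs ↦ hC _ (Complex.mem_reProdIm.2 ⟨?_, ?_⟩)
    · simpa using Ioo_subset_Icc_self hs
    · simpa using uIoc_subset_uIcc hθ
  · exact .of_forall fun θ _ s hs ↦ hd s θ (hs.2.trans ht'T)

lemma continuousOn_fderiv_fderiv_apply {f : ℂ → ℝ} {S : Set ℂ} (hf : ContDiffOn ℝ 2 f S)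
    (hS : IsOpen S) (v : ℂ) : ContinuousOn (fun w ↦ fderiv ℝ (fderiv ℝ f) w v v) S :=
  (((hf.fderiv_of_isOpen hS (m := 1) (by norm_num)).continuousOn_fderiv_of_isOpen hS
    le_rfl).clm_apply continuousOn_const).clm_apply continuousOn_const

lemma integral_fderiv_fderiv_I_verticalLine {f : ℂ → ℝ} {P T t : ℝ}
    (hf : ContDiffOn ℝ 2 f {w | w.re < T}) (hper : ∀ w, f (w + P * I) = f w) (ht : t < T) :
    ∫ θ in (0:ℝ)..P, fderiv ℝ (fderiv ℝ f) (t + θ * I) I I = 0 := by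
  have hd (θ : ℝ) : HasDerivAt (fun x : ℝ ↦ fderiv ℝ f (t + x * I) I)
      (fderiv ℝ (fderiv ℝ f) (t + θ * I) I I) θ :=
    hasDerivAt_fderiv_apply_comp (l := fun x : ℝ ↦ (t : ℂ) + x * I) I
      (hf.contDiffAt ((isOpen_re_lt T).mem_nhds (by simpa using ht)))
      (hasDerivAt_const_add_ofReal_mul_I t θ)
  have hper' : fderiv ℝ f (t + P * I) = fderiv ℝ f t := by
    rw [← fderiv_comp_add_right, funext hper]
  have hc := continuousOn_fderiv_fderiv_apply hf (isOpen_re_lt T) I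
  rw [intervalIntegral.integral_eq_sub_of_hasDerivAt (fun θ _ ↦ hd θ)
    ((continuous_comp_verticalLine hc ht).intervalIntegrable _ _), hper']
  simp

lemma integral_fderiv_fderiv_one_verticalLine {f : ℂ → ℝ} {P T t : ℝ}
    (hf : ContDiffOn ℝ 2 f {w | w.re < T}) (hper : ∀ w, f (w + P * I) = f w) (ht : t < T) :
    ∫ θ in (0:ℝ)..P, fderiv ℝ (fderiv ℝ f) (t + θ * I) 1 1 = ∫ θ in (0:ℝ)..P, Δ f (t + θ * I) := by
  have hint (v : ℂ) : IntervalIntegrable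
      (fun θ : ℝ ↦ fderiv ℝ (fderiv ℝ f) (t + θ * I) v v) volume 0 P :=
    (continuous_comp_verticalLine (continuousOn_fderiv_fderiv_apply hf (isOpen_re_lt T) v)
      ht).intervalIntegrable _ _
  simp only [laplacian_eq_fderiv_fderiv]
  rw [intervalIntegral.integral_add (hint 1) (hint I),
    integral_fderiv_fderiv_I_verticalLine hf hper ht, add_zero]

theorem convexOn_integral_verticalLine {f : ℂ → ℝ} {P T : ℝ} (hP : 0 ≤ P)
    (hf : ContDiffOn ℝ 2 f {w | w.re < T}) (hper : ∀ w, f (w + P * I) = f w)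
    (hΔ : ∀ w : ℂ, w.re < T → 0 ≤ Δ f w) :
    ConvexOn ℝ (Iio T) fun t : ℝ ↦ ∫ θ in (0:ℝ)..P, f (t + θ * I) := by
  have hS := isOpen_re_lt T
  have hat (s θ : ℝ) (hs : s < T) : ContDiffAt ℝ 2 f (s + θ * I) :=
    hf.contDiffAt (hS.mem_nhds (by simpa using hs))
  have hc₁ : ContinuousOn (fun w ↦ fderiv ℝ f w 1) {w | w.re < T} :=
    (hf.continuousOn_fderiv_of_isOpen hS (by norm_num)).clm_apply continuousOn_const
  have hA₁ (t : ℝ) (ht : t < T) : HasDerivAt (fun t : ℝ ↦ ∫ θ in (0:ℝ)..P, f (t + θ * I))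
      (∫ θ in (0:ℝ)..P, fderiv ℝ f (t + θ * I) 1) t :=
    hasDerivAt_integral_verticalLine ht hf.continuousOn hc₁ fun s θ hs ↦
      ((hat s θ hs).differentiableAt (by norm_num)).hasFDerivAt.comp_hasDerivAt s
        (hasDerivAt_ofReal_add_const (θ * I) s)
  have hA₂ (t : ℝ) (ht : t < T) : HasDerivAt (deriv fun t : ℝ ↦ ∫ θ in (0:ℝ)..P, f (t + θ * I))
      (∫ θ in (0:ℝ)..P, Δ f (t + θ * I)) t := by
    rw [← integral_fderiv_fderiv_one_verticalLine hf hper ht]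
    refine (hasDerivAt_integral_verticalLine ht hc₁
      (continuousOn_fderiv_fderiv_apply hf hS 1) fun s θ hs ↦
        hasDerivAt_fderiv_apply_comp (l := fun x : ℝ ↦ (x : ℂ) + θ * I) 1 (hat s θ hs)
          (hasDerivAt_ofReal_add_const (θ * I) s)).congr_of_eventuallyEq ?_
    filter_upwards [Iio_mem_nhds ht] with s hs using (hA₁ s hs).deriv
  refine convexOn_of_deriv2_nonneg' (convex_Iio T)
    (fun t ht ↦ (hA₁ t ht).differentiableAt.differentiableWithinAt)
    (fun t ht ↦ (hA₂ t ht).differentiableAt.differentiableWithinAt) fun t ht ↦ ?_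
  change 0 ≤ deriv (deriv _) t
  rw [(hA₂ t ht).deriv]
  exact intervalIntegral.integral_nonneg hP fun θ _ ↦ hΔ _ (by simpa using ht)

end VerticalAverage

section ConvexAtBot

variable {A : ℝ → ℝ} {T : ℝ}

lemma secant_le_of_convexOn_Iio (hA : ConvexOn ℝ (Iio T) A) {s t t₀ : ℝ} (hst : s < t)
    (htt₀ : t < t₀) (ht₀ : t₀ < T) : A t + (A t₀ - A t) / (t₀ - t) * (s - t) ≤ A s := by
  have hslope := hA.slope_mono_adjacent (mem_Iio.2 (hst.trans (htt₀.trans ht₀))) ht₀ hst htt₀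
  rw [div_le_iff₀ (sub_pos.2 hst)] at hslope
  linarith

lemma le_of_convexOn_Iio_of_tendsto_atBot (hA : ConvexOn ℝ (Iio T) A) {l t : ℝ}
    (hl : Tendsto A atBot (𝓝 l)) (ht : t < T) : l ≤ A t := by
  refine le_of_tendsto hl ((eventually_lt_atBot t).mono fun s hst ↦ ?_)
  by_contra! hlt
  have hm : (A t - A s) / (t - s) < 0 := div_neg_of_neg_of_pos (by linarith) (by linarith)
  refine not_tendsto_nhds_of_tendsto_atTop (tendsto_atTop_mono' _ ?_ <|
    tendsto_atTop_add_const_left _ (A s) <| (tendsto_atBot_add_const_right _ (-s)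
      tendsto_id).const_mul_atBot_of_neg hm) l hl
  filter_upwards [eventually_lt_atBot s] with x hx
  exact secant_le_of_convexOn_Iio hA hx hst ht

lemma linear_le_or_le_linear_of_convexOn_Iio (hA : ConvexOn ℝ (Iio T) A) (ε : ℝ) :
    (∃ C, ∀ᶠ t in atBot, ε * t - C ≤ A t) ∨ ∃ C, ∀ᶠ t in atBot, A t ≤ ε * t + C := by
  obtain ⟨t₀, ht₀⟩ := exists_lt T
  by_cases! hslope : ∃ t < t₀, (A t₀ - A t) / (t₀ - t) ≤ ε
  · obtain ⟨t, htt₀, hle⟩ := hslope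
    refine Or.inl ⟨ε * t - A t, (eventually_lt_atBot t).mono fun s hs ↦ ?_⟩
    nlinarith [secant_le_of_convexOn_Iio hA hs htt₀ ht₀]
  · refine Or.inr ⟨A t₀ - ε * t₀, (eventually_lt_atBot t₀).mono fun s hs ↦ ?_⟩
    have := (lt_div_iff₀ (sub_pos.2 hs)).1 (hslope s hs)
    linarith

end ConvexAtBot

section SubMeanValue

theorem le_circleAverage_of_laplacian_nonneg {u : ℂ → ℝ} {q : ℂ} {R ρ : ℝ}
    (hu : ContDiffOn ℝ 2 u (ball q R)) (hΔ : ∀ w ∈ ball q R, 0 ≤ Δ u w) (hρ : 0 < ρ) (hρR : ρ < R) :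
    u q ≤ Real.circleAverage u q ρ := by
  have hR : 0 < R := hρ.trans hρR
  have hmem {w : ℂ} (hw : w.re < Real.log R) : q + exp w ∈ ball q R := by
    simpa [Complex.norm_exp, ← Real.lt_log_iff_exp_lt hR] using hw
  have hat {w : ℂ} (hw : w.re < Real.log R) : ContDiffAt ℝ 2 u (q + exp w) :=
    hu.contDiffAt (isOpen_ball.mem_nhds (hmem hw))
  have hE : ContDiff ℝ 2 fun w : ℂ ↦ q + exp w := by fun_prop
  have hconv := convexOn_integral_verticalLine (f := fun w ↦ u (q + exp w)) Real.two_pi_pos.le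
    (fun w hw ↦ ((hat hw).comp w hE.contDiffAt).contDiffWithinAt)
    (fun w ↦ by push_cast; rw [Complex.exp_periodic w])
    (fun w hw ↦ by
      rw [laplacian_comp_analytic (f := fun w ↦ q + exp w) (hat hw) (by fun_prop)]
      exact mul_nonneg (sq_nonneg _) (hΔ _ (hmem hw)))
  have hA (t : ℝ) : ∫ θ in (0:ℝ)..2 * Real.pi, u (q + exp (t + θ * I)) =
      2 * Real.pi * Real.circleAverage u q (Real.exp t) := by
    rw [Real.circleAverage_def, smul_eq_mul, mul_inv_cancel_left₀ Real.two_pi_pos.ne']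
    simp [circleMap, Complex.exp_add]
  simp only [hA] at hconv
  have hcont : ContinuousOn (Real.circleAverage u q) (Ico 0 R) :=
    Real.ContinuousOn.circleAverage (hu.continuousOn.mono fun z hz ↦ mem_ball_iff_norm.2 hz.2)
      fun r hr ↦ hr.1
  have hlim : Tendsto (fun t ↦ 2 * Real.pi * Real.circleAverage u q (Real.exp t)) atBot
      (𝓝 (2 * Real.pi * u q)) := by
    rw [← Real.circleAverage_zero (f := u)]
    refine ((hcont 0 ⟨le_rfl, hR⟩).tendsto.comp (tendsto_nhdsWithin_iff.2
      ⟨Real.tendsto_exp_atBot, ?_⟩)).const_mul _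
    filter_upwards [eventually_lt_atBot (Real.log R)] with t ht
    exact ⟨(Real.exp_pos t).le, (Real.lt_log_iff_exp_lt hR).1 ht⟩
  have hle := le_of_convexOn_Iio_of_tendsto_atBot hconv hlim (Real.log_lt_log hρ hρR)
  rw [Real.exp_log hρ] at hle
  exact le_of_mul_le_mul_left hle Real.two_pi_pos

lemma integral_ball_eq_integral_polarCoord (u : ℂ → ℝ) (q : ℂ) (r : ℝ) :
    ∫ x in ball q r, u x =
      ∫ p in Ioo 0 r ×ˢ Ioo (-Real.pi) Real.pi, p.1 * u (circleMap q p.1 p.2) := by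
  have hpolar : ∀ p ∈ polarCoord.target,
      p.1 • (ball q r).indicator u (q + Complex.polarCoord.symm p) =
        (Iio r ×ˢ univ).indicator (fun p : ℝ × ℝ ↦ p.1 * u (circleMap q p.1 p.2)) p := by
    intro p hp
    have hp₁ : 0 < p.1 := hp.1
    have hsym : q + Complex.polarCoord.symm p = circleMap q p.1 p.2 := by
      simp [Complex.polarCoord_symm_apply, circleMap, Complex.exp_mul_I]
    have hmem : circleMap q p.1 p.2 ∈ ball q r ↔ p ∈ Iio r ×ˢ (univ : Set ℝ) := by
      simp [circleMap, abs_of_pos hp₁]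
    rw [hsym, smul_eq_mul]
    by_cases h : p ∈ Iio r ×ˢ (univ : Set ℝ)
    · rw [indicator_of_mem h, indicator_of_mem (hmem.2 h)]
    · rw [indicator_of_notMem h, indicator_of_notMem (mt hmem.1 h), mul_zero]
  have htarget : polarCoord.target ∩ Iio r ×ˢ univ = Ioo 0 r ×ˢ Ioo (-Real.pi) Real.pi := by
    ext p
    simp only [polarCoord_target, mem_inter_iff, mem_prod, mem_Ioi, mem_Ioo, mem_Iio, mem_univ]
    tauto
  rw [← integral_indicator measurableSet_ball,
    ← integral_add_left_eq_self (fun x ↦ (ball q r).indicator u x) q,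
    ← Complex.integral_comp_polarCoord_symm,
    setIntegral_congr_fun polarCoord.open_target.measurableSet hpolar,
    setIntegral_indicator (measurableSet_Iio.prod .univ), htarget]

lemma integral_Ioo_circleMap_eq_circleAverage (u : ℂ → ℝ) (q : ℂ) (ρ : ℝ) :
    ∫ θ in Ioo (-Real.pi) Real.pi, u (circleMap q ρ θ) =
      2 * Real.pi * Real.circleAverage u q ρ := by
  have hshift : ∫ θ in (0:ℝ)..2 * Real.pi, u (circleMap q ρ (θ + -Real.pi)) =
      ∫ θ in (-Real.pi)..Real.pi, u (circleMap q ρ θ) := by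
    rw [intervalIntegral.integral_comp_add_right fun θ ↦ u (circleMap q ρ θ)]
    congr 1 <;> ring
  rw [Real.circleAverage_eq_integral_add (-Real.pi), hshift, ← integral_Ioc_eq_integral_Ioo,
    ← intervalIntegral.integral_of_le (by linarith [Real.pi_pos]), smul_eq_mul,
    mul_inv_cancel_left₀ Real.two_pi_pos.ne']

lemma integral_ball_eq_integral_circleAverage {u : ℂ → ℝ} {q : ℂ} {r : ℝ}
    (hu : ContinuousOn u (closedBall q r)) :
    ∫ x in ball q r, u x = ∫ ρ in Ioo 0 r, 2 * Real.pi * ρ * Real.circleAverage u q ρ := by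
  have hint : IntegrableOn (fun p : ℝ × ℝ ↦ p.1 * u (circleMap q p.1 p.2))
      (Ioo 0 r ×ˢ Ioo (-Real.pi) Real.pi) := by
    refine IntegrableOn.mono_set (ContinuousOn.integrableOn_compact
      (isCompact_Icc.prod isCompact_Icc) (continuousOn_fst.mul (hu.comp ?_ ?_)))
      (prod_mono Ioo_subset_Icc_self Ioo_subset_Icc_self)
    · unfold circleMap; fun_prop
    · intro p hp
      simpa [mem_closedBall_iff_norm, circleMap, abs_of_nonneg hp.1.1] using hp.1.2
  rw [integral_ball_eq_integral_polarCoord, Measure.volume_eq_prod,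
    setIntegral_prod _ (by rwa [← Measure.volume_eq_prod])]
  refine setIntegral_congr_fun measurableSet_Ioo fun ρ _ ↦ ?_
  simp only [integral_const_mul, integral_Ioo_circleMap_eq_circleAverage]
  ring

theorem area_mul_le_integral_ball_of_laplacian_nonneg {u : ℂ → ℝ} {q : ℂ} {r : ℝ} (hr : 0 ≤ r)
    (hu : ContDiffOn ℝ 2 u (ball q r)) (hc : ContinuousOn u (closedBall q r))
    (hΔ : ∀ w ∈ ball q r, 0 ≤ Δ u w) : Real.pi * r ^ 2 * u q ≤ ∫ x in ball q r, u x := by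
  have hcont : ContinuousOn (Real.circleAverage u q) (Icc 0 r) :=
    Real.ContinuousOn.circleAverage (hc.mono fun z hz ↦ mem_closedBall_iff_norm.2 hz.2)
      fun r hr ↦ hr.1
  have hint {f : ℝ → ℝ} (hf : ContinuousOn f (Icc 0 r)) : IntegrableOn f (Ioo 0 r) :=
    (hf.integrableOn_compact isCompact_Icc).mono_set Ioo_subset_Icc_self
  calc Real.pi * r ^ 2 * u q = ∫ ρ in Ioo 0 r, 2 * Real.pi * ρ * u q := by
        rw [← integral_Ioc_eq_integral_Ioo, ← intervalIntegral.integral_of_le hr]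
        rw [intervalIntegral.integral_mul_const, intervalIntegral.integral_const_mul, integral_id]
        ring
    _ ≤ ∫ ρ in Ioo 0 r, 2 * Real.pi * ρ * Real.circleAverage u q ρ := by
        refine setIntegral_mono_on (hint (by fun_prop)) (hint (by fun_prop)) measurableSet_Ioo
          fun ρ hρ ↦ mul_le_mul_of_nonneg_left
            (le_circleAverage_of_laplacian_nonneg hu hΔ hρ.1 hρ.2) ?_
        exact mul_nonneg Real.two_pi_pos.le hρ.1.le
    _ = ∫ x in ball q r, u x := (integral_ball_eq_integral_circleAverage hc).symm

end SubMeanValue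

section Harnack

theorem area_mul_le_integral_ball_of_neg_le_laplacian {u : ℂ → ℝ} {q : ℂ} {K r : ℝ} (hr : 0 ≤ r)
    (hK : 0 ≤ K) (hu : ContDiffOn ℝ 2 u (ball q r)) (hc : ContinuousOn u (closedBall q r))
    (hΔ : ∀ w ∈ ball q r, -(4 * K) ≤ Δ u w) :
    Real.pi * r ^ 2 * (u q - K * r ^ 2) ≤ ∫ x in ball q r, u x := by
  have hN : ContDiff ℝ 2 fun x : ℂ ↦ ‖x - q‖ ^ 2 := contDiff_norm_sub_sq q
  have hKN : ContDiff ℝ 2 (K • fun x : ℂ ↦ ‖x - q‖ ^ 2) := hN.const_smul K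
  have hcN : ContinuousOn (u + K • fun x ↦ ‖x - q‖ ^ 2) (closedBall q r) :=
    hc.add hKN.continuous.continuousOn
  have hvol : volume.real (ball q r) = Real.pi * r ^ 2 := by
    simp [Measure.real, hr, mul_comm]
  have hint {f : ℂ → ℝ} (hf : ContinuousOn f (closedBall q r)) : IntegrableOn f (ball q r) :=
    (hf.integrableOn_compact (isCompact_closedBall _ _)).mono_set ball_subset_closedBall
  have harea : Real.pi * r ^ 2 * u q ≤ ∫ x in ball q r, (u + K • fun x ↦ ‖x - q‖ ^ 2) x := by
    have := area_mul_le_integral_ball_of_laplacian_nonneg (u := u + K • fun x ↦ ‖x - q‖ ^ 2) hr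
      (hu.add hKN.contDiffOn) hcN fun x hx ↦ by
        rw [(hu.contDiffAt (isOpen_ball.mem_nhds hx)).laplacian_add hKN.contDiffAt,
          laplacian_smul K hN.contDiffAt, laplacian_norm_sub_sq, Complex.finrank_real_complex,
          smul_eq_mul]
        push_cast
        linarith [hΔ x hx]
    simpa using this
  have hmono : ∫ x in ball q r, (u + K • fun x ↦ ‖x - q‖ ^ 2) x ≤
      ∫ x in ball q r, (u x + K * r ^ 2) := by
    refine setIntegral_mono_on (hint hcN) (hint (by fun_prop)) measurableSet_ball fun x hx ↦ ?_
    have hx' : ‖x - q‖ ≤ r := (mem_ball_iff_norm.1 hx).le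
    simp only [Pi.add_apply, Pi.smul_apply, smul_eq_mul]
    gcongr
  rw [integral_add (hint hc) (hint continuousOn_const), setIntegral_const, hvol,
    smul_eq_mul] at hmono
  linarith

theorem le_mul_add_of_laplacian_mem_Icc {v : ℂ → ℝ} {p q : ℂ} {K s ρ : ℝ} (hs : 0 < s)
    (hq : dist q p + s ≤ ρ) (hv : ContDiffOn ℝ 2 v (ball p ρ))
    (hvc : ContinuousOn v (closedBall p ρ)) (hv₀ : ∀ w ∈ ball p ρ, 0 ≤ v w)
    (hΔ : ∀ w ∈ ball p ρ, Δ v w ∈ Icc (-(4 * K)) 0) :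
    v q ≤ (ρ / s) ^ 2 * v p + K * s ^ 2 := by
  have hρ : 0 < ρ := hs.trans_le (by linarith [dist_nonneg (x := q) (y := p)])
  have hK : 0 ≤ K := by
    have hp := hΔ p (mem_ball_self hρ)
    linarith [hp.1, hp.2]
  have hsub : ball q s ⊆ ball p ρ := ball_subset_ball' (by linarith)
  have hlower : Real.pi * s ^ 2 * (v q - K * s ^ 2) ≤ ∫ x in ball q s, v x :=
    area_mul_le_integral_ball_of_neg_le_laplacian hs.le hK (hv.mono hsub)
      (hvc.mono (closedBall_subset_closedBall' (by linarith))) fun w hw ↦ (hΔ w (hsub hw)).1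
  have hmono : ∫ x in ball q s, v x ≤ ∫ x in ball p ρ, v x :=
    setIntegral_mono_set ((hvc.integrableOn_compact (isCompact_closedBall _ _)).mono_set
      ball_subset_closedBall) ((ae_restrict_iff' measurableSet_ball).2 (.of_forall hv₀))
      hsub.eventuallyLE
  have hupper : ∫ x in ball p ρ, v x ≤ Real.pi * ρ ^ 2 * v p := by
    have := area_mul_le_integral_ball_of_laplacian_nonneg (u := -v) hρ.le hv.neg hvc.neg
      fun x hx ↦ by simpa [laplacian_neg] using (hΔ x hx).2
    simp only [Pi.neg_apply, integral_neg] at this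
    linarith
  refine le_of_mul_le_mul_left ?_ (by positivity : 0 < Real.pi * s ^ 2)
  calc Real.pi * s ^ 2 * v q
      ≤ Real.pi * ρ ^ 2 * v p + Real.pi * s ^ 2 * (K * s ^ 2) := by linarith
    _ = Real.pi * s ^ 2 * ((ρ / s) ^ 2 * v p + K * s ^ 2) := by field_simp

variable {v : ℂ → ℝ} {K T : ℝ}

lemma le_mul_add_of_laplacian_mem_Icc_of_re_eq (hv : ContDiffOn ℝ 2 v {w | w.re < T})
    (hv₀ : ∀ w : ℂ, w.re < T → 0 ≤ v w) (hΔ : ∀ w : ℂ, w.re < T → Δ v w ∈ Icc (-(4 * K)) 0)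
    {p q : ℂ} (hre : q.re = p.re) (hp : p.re + (1 + 2 * Real.pi) < T)
    (him : |q.im - p.im| ≤ 2 * Real.pi) : v q ≤ (1 + 2 * Real.pi) ^ 2 * v p + K := by
  have hsub : closedBall p (1 + 2 * Real.pi) ⊆ {w | w.re < T} := fun w hw ↦ by
    have := (Complex.re_le_norm (w - p)).trans (mem_closedBall_iff_norm.1 hw)
    rw [Complex.sub_re] at this
    change w.re < T
    linarith
  have hball := ball_subset_closedBall.trans hsub
  have hdist : dist q p + 1 ≤ 1 + 2 * Real.pi := by
    rw [Complex.dist_of_re_eq hre, Real.dist_eq]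
    linarith
  simpa using le_mul_add_of_laplacian_mem_Icc one_pos hdist (hv.mono hball)
    (hv.continuousOn.mono hsub) (fun w hw ↦ hv₀ w (hball hw)) fun w hw ↦ hΔ w (hball hw)

lemma integral_verticalLine_comp_add_im (hper : Function.Periodic v (2 * Real.pi * I)) (w : ℂ) :
    ∫ θ in (0:ℝ)..2 * Real.pi, v (w + θ * I) = ∫ θ in (0:ℝ)..2 * Real.pi, v (w.re + θ * I) := by
  have hper' : Function.Periodic (fun θ : ℝ ↦ v (w.re + θ * I)) (2 * Real.pi) := fun θ ↦ by
    simpa [add_mul, add_assoc] using hper (w.re + θ * I)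
  have hw (θ : ℝ) : w + θ * I = w.re + ((θ + w.im : ℝ) : ℂ) * I := by
    conv_lhs => rw [← Complex.re_add_im w]
    push_cast
    ring
  simp only [hw]
  rw [intervalIntegral.integral_comp_add_right fun θ : ℝ ↦ v (w.re + θ * I), zero_add, add_comm,
    hper'.intervalIntegral_add_eq w.im 0, zero_add]

theorem harnack_integral_verticalLine (hv : ContDiffOn ℝ 2 v {w | w.re < T})
    (hper : Function.Periodic v (2 * Real.pi * I)) (hv₀ : ∀ w : ℂ, w.re < T → 0 ≤ v w)
    (hΔ : ∀ w : ℂ, w.re < T → Δ v w ∈ Icc (-(4 * K)) 0) {w : ℂ}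
    (hw : w.re + (1 + 2 * Real.pi) < T) :
    2 * Real.pi * (v w - K) ≤
        (1 + 2 * Real.pi) ^ 2 * ∫ θ in (0:ℝ)..2 * Real.pi, v (w.re + θ * I) ∧
      ∫ θ in (0:ℝ)..2 * Real.pi, v (w.re + θ * I) ≤
        2 * Real.pi * ((1 + 2 * Real.pi) ^ 2 * v w + K) := by
  have hcont : Continuous fun θ : ℝ ↦ v (w + θ * I) :=
    hv.continuousOn.comp_continuous (by fun_prop) fun θ ↦ by
      simpa using (by linarith [Real.pi_pos] : w.re < T)
  rw [← integral_verticalLine_comp_add_im hper, ← intervalIntegral.integral_const_mul]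
  have hconst (c : ℝ) : 2 * Real.pi * c = ∫ _ in (0:ℝ)..2 * Real.pi, c := by simp
  rw [hconst, hconst]
  constructor
  · refine intervalIntegral.integral_mono_on Real.two_pi_pos.le intervalIntegrable_const
      ((hcont.const_mul _).intervalIntegrable _ _) fun θ hθ ↦ sub_le_iff_le_add.2 ?_
    exact le_mul_add_of_laplacian_mem_Icc_of_re_eq hv hv₀ hΔ (by simp) (by simpa using hw)
      (by simpa [abs_of_nonneg hθ.1] using hθ.2)
  · refine intervalIntegral.integral_mono_on Real.two_pi_pos.le
      (hcont.intervalIntegrable _ _) intervalIntegrable_const fun θ hθ ↦ ?_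
    exact le_mul_add_of_laplacian_mem_Icc_of_re_eq hv hv₀ hΔ (by simp) hw
      (by simpa [abs_of_nonneg hθ.1] using hθ.2)

end Harnack

section Dichotomy

theorem linear_dichotomy_of_laplacian_mem_Icc {v : ℂ → ℝ} {K T η : ℝ} (hη : 0 < η)
    (hv : ContDiffOn ℝ 2 v {w | w.re < T}) (hper : Function.Periodic v (2 * Real.pi * I))
    (hv₀ : ∀ w : ℂ, w.re < T → 0 ≤ v w)
    (hΔ : ∀ w : ℂ, w.re < T → Δ v w ∈ Icc (-(4 * K)) 0) :
    (∃ C, ∀ᶠ w in comap re atBot, v w ≤ C - η * w.re) ∨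
      ∃ δ > 0, ∃ C, ∀ᶠ w in comap re atBot, -(δ * w.re) - C ≤ v w := by
  set κ : ℝ := (1 + 2 * Real.pi) ^ 2
  have hκ : 0 < κ := by positivity
  have hπ := Real.two_pi_pos
  have hconv : ConvexOn ℝ (Iio T) fun t : ℝ ↦ ∫ θ in (0:ℝ)..2 * Real.pi, (-v) (t + θ * I) :=
    convexOn_integral_verticalLine hπ.le hv.neg
      (fun w ↦ by simpa using congrArg Neg.neg (hper w))
      fun w hw ↦ by simpa [laplacian_neg] using (hΔ w hw).2
  simp only [Pi.neg_apply, intervalIntegral.integral_neg] at hconv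
  have hev : ∀ᶠ w in comap re atBot, w.re + (1 + 2 * Real.pi) < T :=
    ((eventually_lt_atBot (T - (1 + 2 * Real.pi))).comap re).mono fun w hw ↦ by linarith
  refine (linear_le_or_le_linear_of_convexOn_Iio hconv (2 * Real.pi * η / κ)).imp ?_ ?_
  · rintro ⟨C, hC⟩
    refine ⟨κ * C / (2 * Real.pi) + K, ?_⟩
    filter_upwards [hC.comap re, hev] with w hCw hw
    refine le_of_mul_le_mul_left ?_ hπ
    have hupper := (harnack_integral_verticalLine hv hper hv₀ hΔ hw).1
    have hmul := mul_le_mul_of_nonneg_left hCw hκ.le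
    have : 2 * Real.pi * (κ * C / (2 * Real.pi) + K - η * w.re) =
      2 * Real.pi * K - κ * (2 * Real.pi * η / κ * w.re - C) := by field_simp; ring
    linarith
  · rintro ⟨C, hC⟩
    refine ⟨η / κ ^ 2, by positivity, (C / (2 * Real.pi) + K) / κ, ?_⟩
    filter_upwards [hC.comap re, hev] with w hCw hw
    have hlower := (harnack_integral_verticalLine hv hper hv₀ hΔ hw).2
    refine le_of_mul_le_mul_left ?_ (mul_pos hπ hκ)
    have : 2 * Real.pi * κ * (-(η / κ ^ 2 * w.re) - (C / (2 * Real.pi) + K) / κ) =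
      -(2 * Real.pi * η / κ * w.re) - C - 2 * Real.pi * K := by field_simp; ring
    linarith

theorem linear_dichotomy_of_exp_le_laplacian {b : ℂ → ℝ} {M η : ℝ} (hη : 0 < η)
    (hb : ContDiffOn ℝ 2 b {w | w.re < 0}) (hper : Function.Periodic b (2 * Real.pi * I))
    (hΔ : ∀ w : ℂ, w.re < 0 → Δ b w ∈ Icc (Real.exp (2 * b w)) (M * Real.exp (2 * b w))) :
    (∃ C, ∀ᶠ w in comap re atBot, η * w.re - C ≤ b w) ∨
      ∃ δ > 0, ∃ C, ∀ᶠ w in comap re atBot, b w ≤ δ * w.re + C := by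
  have hexp {w : ℂ} (hw : w.re < -1) : Real.exp (b w) ≤ 2 := by
    have hsub : closedBall w 1 ⊆ {w | w.re < 0} := fun z hz ↦ by
      have := (Complex.re_le_norm (z - w)).trans (mem_closedBall_iff_norm.1 hz)
      rw [Complex.sub_re] at this
      change z.re < 0
      linarith
    have hball := ball_subset_closedBall.trans hsub
    simpa using exp_le_of_exp_le_laplacian one_pos (hb.mono hball) (hb.continuousOn.mono hsub)
      fun z hz ↦ (hΔ z (hball hz)).1
  have hmono : {w : ℂ | w.re < -1} ⊆ {w | w.re < 0} := fun w (hw : w.re < -1) ↦ by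
    change w.re < 0
    linarith
  have hv : ContDiffOn ℝ 2 (fun w ↦ Real.log 2 - b w) {w | w.re < -1} :=
    contDiffOn_const.sub (hb.mono hmono)
  have hΔv (w : ℂ) (hw : w.re < -1) : Δ (fun w ↦ Real.log 2 - b w) w ∈ Icc (-(4 * M)) 0 := by
    have hbw : ContDiffAt ℝ 2 b w := hb.contDiffAt ((isOpen_re_lt 0).mem_nhds (hmono hw))
    obtain ⟨hlow, hup⟩ := hΔ w (hmono hw)
    have hexp₂ : Real.exp (2 * b w) ≤ 4 := by
      rw [two_mul, Real.exp_add]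
      nlinarith [hexp hw, Real.exp_pos (b w)]
    have heq : Δ (fun w ↦ Real.log 2 - b w) w = -Δ b w := by
      rw [show (fun w ↦ Real.log 2 - b w) = (fun _ ↦ Real.log 2) - b from rfl,
        contDiffAt_const.laplacian_sub hbw]
      simp
    have hM : 0 < M := by nlinarith [Real.exp_pos (2 * b w)]
    rw [heq]
    constructor <;> nlinarith [Real.exp_pos (2 * b w)]
  refine (linear_dichotomy_of_laplacian_mem_Icc hη hv
    (fun w ↦ by simp only [hper w]) (fun w hw ↦ ?_) hΔv).imp ?_ ?_
  · exact sub_nonneg.2 ((Real.le_log_iff_exp_le two_pos).2 (hexp hw))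
  · rintro ⟨C, hC⟩
    exact ⟨C - Real.log 2, hC.mono fun w hw ↦ by linarith⟩
  · rintro ⟨δ, hδ, C, hC⟩
    exact ⟨δ, hδ, C + Real.log 2, hC.mono fun w hw ↦ by linarith⟩

lemma laplacian_re (w : ℂ) : Δ re w = 0 := by
  have : fderiv ℝ re = fun _ ↦ Complex.reCLM := funext fun z ↦ Complex.reCLM.fderiv
  simp [laplacian_eq_fderiv_fderiv, this]

lemma tendsto_log_comap_re_atBot : Tendsto Complex.log (𝓝[≠] 0) (comap re atBot) := by
  refine tendsto_comap_iff.2 ?_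
  have : re ∘ Complex.log = Real.log ∘ norm := funext Complex.log_re
  rw [this]
  exact Real.tendsto_log_nhdsGT_zero.comp tendsto_norm_nhdsNE_zero

theorem log_norm_dichotomy_of_exp_le_laplacian {a : ℂ → ℝ} {M η : ℝ} (hη : 0 < η)
    (ha : ContDiffOn ℝ 2 a (ball 0 1 \ {0}))
    (hΔ : ∀ z ∈ ball (0 : ℂ) 1 \ {0},
      Δ a z ∈ Icc (Real.exp (2 * a z)) (M * Real.exp (2 * a z))) :
    (∃ C, ∀ᶠ z in 𝓝[≠] (0 : ℂ), (η - 1) * Real.log ‖z‖ - C ≤ a z) ∨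
      ∃ δ > 0, ∃ C, ∀ᶠ z in 𝓝[≠] (0 : ℂ), a z ≤ (δ - 1) * Real.log ‖z‖ + C := by
  have hmem {w : ℂ} (hw : w.re < 0) : exp w ∈ ball (0 : ℂ) 1 \ {0} :=
    ⟨by simpa [Complex.norm_exp] using hw, exp_ne_zero w⟩
  have hat {w : ℂ} (hw : w.re < 0) : ContDiffAt ℝ 2 a (exp w) :=
    ha.contDiffAt ((isOpen_ball.sdiff isClosed_singleton).mem_nhds (hmem hw))
  have hcomp {w : ℂ} (hw : w.re < 0) : ContDiffAt ℝ 2 (a ∘ exp) w :=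
    (hat hw).comp w (by fun_prop)
  have hre (w : ℂ) : ContDiffAt ℝ 2 re w := Complex.reCLM.contDiff.contDiffAt
  have hexp (w : ℂ) : Real.exp (2 * (a ∘ exp + re) w) = ‖exp w‖ ^ 2 * Real.exp (2 * a (exp w)) := by
    rw [Complex.norm_exp, ← Real.exp_nat_mul, ← Real.exp_add, Pi.add_apply, Function.comp_apply]
    push_cast
    ring_nf
  have hdich := linear_dichotomy_of_exp_le_laplacian (b := a ∘ exp + re) (M := M) hη
    (fun w hw ↦ ((hcomp hw).add (hre w)).contDiffWithinAt)
    (fun w ↦ by simp [Complex.exp_periodic w])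
    (fun w hw ↦ by
      have hlap := laplacian_comp_analytic (hat hw) (f := exp) (by fun_prop)
      obtain ⟨hlow, hup⟩ := hΔ _ (hmem hw)
      rw [(hcomp hw).laplacian_add (hre w), laplacian_re, add_zero, Function.comp_def, hlap,
        ← Function.comp_def, hexp, Complex.deriv_exp, mul_left_comm M]
      exact ⟨by gcongr, by gcongr⟩)
  refine hdich.imp ?_ ?_
  · rintro ⟨C, hC⟩
    refine ⟨C, ?_⟩
    filter_upwards [tendsto_log_comap_re_atBot.eventually hC, self_mem_nhdsWithin] with z hz hz₀
    simp only [Pi.add_apply, Function.comp_apply, exp_log hz₀, Complex.log_re] at hz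
    linarith
  · rintro ⟨δ, hδ, C, hC⟩
    refine ⟨δ, hδ, C, ?_⟩
    filter_upwards [tendsto_log_comap_re_atBot.eventually hC, self_mem_nhdsWithin] with z hz hz₀
    simp only [Pi.add_apply, Function.comp_apply, exp_log hz₀, Complex.log_re] at hz
    linarith

end Dichotomy

section BlowUp

lemma integrableAtFilter_exp_of_le_log {a : ℝ → ℝ} {δ C : ℝ} (hδ : 0 < δ)
    (ha : StronglyMeasurableAtFilter (fun t ↦ Real.exp (a t)) (𝓝[>] 0))
    (hle : ∀ᶠ t in 𝓝[>] (0 : ℝ), a t ≤ (δ - 1) * Real.log t + C) :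
    IntegrableAtFilter (fun t ↦ Real.exp (a t)) (𝓝[>] 0) := by
  have hpow : IntegrableAtFilter (fun t : ℝ ↦ t ^ (δ - 1)) (𝓝[>] 0) :=
    ⟨Ioc 0 1, Ioc_mem_nhdsGT one_pos, (intervalIntegrable_iff_integrableOn_Ioc_of_le zero_le_one).1
      (intervalIntegral.intervalIntegrable_rpow' (by linarith))⟩
  refine (Asymptotics.IsBigO.of_bound (Real.exp C) ?_).integrableAtFilter ha hpow
  filter_upwards [hle, self_mem_nhdsWithin] with t ht (ht₀ : 0 < t)
  rw [Real.norm_of_nonneg (Real.exp_pos _).le, Real.norm_of_nonneg (by positivity),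
    Real.rpow_def_of_pos ht₀, ← Real.exp_add]
  gcongr
  linarith

theorem tendsto_atTop_of_exp_le_laplacian {a : ℂ → ℝ} {M : ℝ}
    (ha : ContDiffOn ℝ 2 a (ball 0 1 \ {0}))
    (hΔ : ∀ z ∈ ball (0 : ℂ) 1 \ {0},
      Δ a z ∈ Icc (Real.exp (2 * a z)) (M * Real.exp (2 * a z)))
    (hray : ¬IntegrableAtFilter (fun t : ℝ ↦ Real.exp (a t)) (𝓝[>] 0)) :
    Tendsto a (𝓝[≠] 0) atTop := by
  rcases log_norm_dichotomy_of_exp_le_laplacian (η := 1 / 2) (by norm_num) ha hΔ with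
    ⟨C, hC⟩ | ⟨δ, hδ, C, hC⟩
  · refine tendsto_atTop_mono' _ hC (tendsto_atTop_add_const_right _ (-C) ?_)
    exact (Real.tendsto_log_nhdsGT_zero.comp tendsto_norm_nhdsNE_zero).const_mul_atBot_of_neg
      (by norm_num)
  · refine absurd ?_ hray
    have hreal : Tendsto ((↑) : ℝ → ℂ) (𝓝[>] 0) (𝓝[≠] 0) := by
      refine tendsto_nhdsWithin_iff.2 ⟨?_, ?_⟩
      · exact (Complex.continuous_ofReal.tendsto' 0 0 Complex.ofReal_zero).mono_left
          nhdsWithin_le_nhds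
      · exact eventually_mem_nhdsWithin.mono fun t (ht : 0 < t) ↦ by simpa using ht.ne'
    have hcont : ContinuousOn (fun t : ℝ ↦ Real.exp (a t)) (Ioo 0 1) :=
      Real.continuous_exp.comp_continuousOn (ha.continuousOn.comp (by fun_prop) fun t ht ↦
        ⟨by simpa [abs_of_pos ht.1] using ht.2, by simpa using ht.1.ne'⟩)
    refine integrableAtFilter_exp_of_le_log (a := fun t : ℝ ↦ a t) (C := C) hδ
      ⟨Ioo 0 1, Ioo_mem_nhdsGT one_pos, hcont.aestronglyMeasurable measurableSet_Ioo⟩ ?_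
    filter_upwards [hreal.eventually hC, self_mem_nhdsWithin] with t ht (ht₀ : 0 < t)
    simpa [abs_of_pos ht₀] using ht

end BlowUp

section SoftCap

/-- A smooth, concave and monotone approximation of `fun s ↦ min m s`: it is the identity up to
height `m` and constant from height `m + 1` on. -/
noncomputable def softCap (m s : ℝ) : ℝ := s - ∫ x in (0:ℝ)..s - m, Real.smoothTransition x

variable {m s : ℝ}

lemma hasDerivAt_integral_smoothTransition (s : ℝ) :
    HasDerivAt (fun y ↦ ∫ x in (0:ℝ)..y, Real.smoothTransition x) (Real.smoothTransition s) s :=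
  intervalIntegral.integral_hasDerivAt_right
    (Real.smoothTransition.continuous.intervalIntegrable _ _)
    Real.smoothTransition.continuous.stronglyMeasurable.stronglyMeasurableAtFilter
    Real.smoothTransition.continuousAt

lemma monotone_integral_smoothTransition :
    Monotone fun y ↦ ∫ x in (0:ℝ)..y, Real.smoothTransition x :=
  monotone_of_hasDerivAt_nonneg hasDerivAt_integral_smoothTransition Real.smoothTransition.nonneg

lemma hasDerivAt_softCap (m s : ℝ) :
    HasDerivAt (softCap m) (1 - Real.smoothTransition (s - m)) s :=
  (hasDerivAt_id s).sub ((hasDerivAt_integral_smoothTransition (s - m)).comp_sub_const s m)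

lemma deriv_softCap (m : ℝ) : deriv (softCap m) = fun s ↦ 1 - Real.smoothTransition (s - m) :=
  funext fun s ↦ (hasDerivAt_softCap m s).deriv

lemma differentiable_softCap (m : ℝ) : Differentiable ℝ (softCap m) := fun s ↦
  (hasDerivAt_softCap m s).differentiableAt

lemma contDiff_softCap (m : ℝ) : ContDiff ℝ ∞ (softCap m) := by
  rw [contDiff_infty_iff_deriv, deriv_softCap]
  exact ⟨differentiable_softCap m,
    contDiff_const.sub (Real.smoothTransition.contDiff.comp (contDiff_id.sub contDiff_const))⟩

lemma monotone_softCap (m : ℝ) : Monotone (softCap m) :=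
  monotone_of_deriv_nonneg (differentiable_softCap m) fun s ↦ by
    rw [deriv_softCap]
    exact sub_nonneg.2 (Real.smoothTransition.le_one _)

lemma deriv_deriv_softCap_nonpos (m s : ℝ) : deriv (deriv (softCap m)) s ≤ 0 := by
  rw [deriv_softCap]
  exact Antitone.deriv_nonpos fun x y hxy ↦
    sub_le_sub_left (Real.smoothTransition.monotone (sub_le_sub_right hxy m)) 1

lemma softCap_of_le (h : s ≤ m) : softCap m s = s := by
  rw [softCap, sub_eq_self]
  refine intervalIntegral.integral_zero_ae (.of_forall fun x hx ↦ ?_)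
  rw [uIoc_of_ge (sub_nonpos.2 h)] at hx
  exact Real.smoothTransition.zero_of_nonpos hx.2

lemma softCap_of_add_one_le (h : m + 1 ≤ s) : softCap m s = softCap m (m + 1) := by
  have hone : ∫ x in (1:ℝ)..s - m, Real.smoothTransition x = s - m - 1 := by
    rw [intervalIntegral.integral_congr (g := fun _ ↦ (1:ℝ))]
    · simp
    · intro x hx
      rw [uIcc_of_le (by linarith)] at hx
      exact Real.smoothTransition.one_of_one_le hx.1
  have hint (y z : ℝ) := Real.smoothTransition.continuous.intervalIntegrable (μ := volume) y z
  rw [softCap, softCap, ← intervalIntegral.integral_add_adjacent_intervals (hint 0 1) (hint 1 _),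
    hone, add_sub_cancel_left]
  ring

lemma softCap_le_self (m s : ℝ) : softCap m s ≤ s := by
  rcases le_total s m with h | h
  · exact (softCap_of_le h).le
  · have := monotone_integral_smoothTransition (sub_nonneg.2 h)
    simp only [intervalIntegral.integral_same] at this
    exact sub_le_self s this

lemma min_le_softCap (m s : ℝ) : min m s ≤ softCap m s := by
  rw [← softCap_of_le (min_le_left m s)]
  exact monotone_softCap m (min_le_right m s)

lemma monotone_softCap_left (s : ℝ) : Monotone fun m ↦ softCap m s := fun _ _ h ↦
  sub_le_sub_left (monotone_integral_smoothTransition (sub_le_sub_left h s)) s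

lemma monotone_softCap_add_one : Monotone fun m ↦ softCap m (m + 1) := fun m n h ↦ by
  simpa [softCap] using h

end SoftCap

section CuspTruncation

variable {E : Type*} [NormedAddCommGroup E] {a : E → ℝ} {m : ℝ} {z : E}

open Classical in
/-- The truncation at height `m` of a function `a` on `E \ {0}` which tends to `∞` at the origin.
The junk value `a 0` is replaced by `m + 1`, from which height on `softCap m` is constant. -/
noncomputable def cuspTruncation (a : E → ℝ) (m : ℝ) (z : E) : ℝ :=
  softCap m (if z = 0 then m + 1 else a z)

lemma cuspTruncation_zero (a : E → ℝ) (m : ℝ) : cuspTruncation a m 0 = softCap m (m + 1) :=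
  congrArg (softCap m) (if_pos rfl)

lemma cuspTruncation_of_ne (a : E → ℝ) (m : ℝ) (hz : z ≠ 0) :
    cuspTruncation a m z = softCap m (a z) :=
  congrArg (softCap m) (if_neg hz)

lemma cuspTruncation_eventuallyEq_const (ha : Tendsto a (𝓝[≠] 0) atTop) (m : ℝ) :
    cuspTruncation a m =ᶠ[𝓝 0] fun _ ↦ softCap m (m + 1) := by
  filter_upwards [eventually_nhdsWithin_iff.1 (ha.eventually_ge_atTop (m + 1))] with z hz
  rcases eq_or_ne z 0 with rfl | hz₀
  · exact cuspTruncation_zero a m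
  · rw [cuspTruncation_of_ne a m hz₀, softCap_of_add_one_le (hz hz₀)]

lemma cuspTruncation_eventuallyEq_comp (a : E → ℝ) (m : ℝ) (hz : z ≠ 0) :
    cuspTruncation a m =ᶠ[𝓝 z] fun w ↦ softCap m (a w) :=
  (isOpen_ne.eventually_mem hz).mono fun _ hw ↦ cuspTruncation_of_ne a m hw

lemma cuspTruncation_le_self (m : ℝ) (hz : z ≠ 0) : cuspTruncation a m z ≤ a z :=
  (cuspTruncation_of_ne a m hz).trans_le (softCap_le_self m _)

lemma cuspTruncation_eq_self (hz : z ≠ 0) (h : a z ≤ m) : cuspTruncation a m z = a z :=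
  (cuspTruncation_of_ne a m hz).trans (softCap_of_le h)

lemma le_cuspTruncation {R : ℝ} (hm : R ≤ m) (ha : z ≠ 0 → R ≤ a z) : R ≤ cuspTruncation a m z := by
  rcases eq_or_ne z 0 with rfl | hz
  · rw [cuspTruncation_zero]
    exact (le_min hm (by linarith)).trans (min_le_softCap m (m + 1))
  · rw [cuspTruncation_of_ne a m hz]
    exact (le_min hm (ha hz)).trans (min_le_softCap m (a z))

lemma monotone_cuspTruncation (a : E → ℝ) : Monotone (cuspTruncation a) := fun m n h z ↦ by
  rcases eq_or_ne z 0 with rfl | hz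
  · simpa only [cuspTruncation_zero] using monotone_softCap_add_one h
  · simpa only [cuspTruncation_of_ne a _ hz] using monotone_softCap_left (a z) h

lemma contDiffAt_cuspTruncation [NormedSpace ℝ E] (h₀ : Tendsto a (𝓝[≠] 0) atTop)
    (ha : z ≠ 0 → ContDiffAt ℝ ∞ a z) (m : ℝ) : ContDiffAt ℝ ∞ (cuspTruncation a m) z := by
  rcases eq_or_ne z 0 with rfl | hz
  · exact contDiffAt_const.congr_of_eventuallyEq (cuspTruncation_eventuallyEq_const h₀ m)
  · exact ((contDiff_softCap m).contDiffAt.comp z (ha hz)).congr_of_eventuallyEq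
      (cuspTruncation_eventuallyEq_comp a m hz)

end CuspTruncation

section CurvatureBound

variable {E : Type*} [NormedAddCommGroup E] [InnerProductSpace ℝ E] [FiniteDimensional ℝ E]
  {a : E → ℝ} {M : ℝ} {z : E}

lemma laplacian_softCap_comp_le (hM : 0 ≤ M) (ha : ContDiffAt ℝ 2 a z)
    (hΔ : Δ a z ≤ M * Real.exp (2 * a z)) (m : ℝ) :
    Δ (fun w ↦ softCap m (a w)) z ≤ M * Real.exp 2 * Real.exp (2 * softCap m (a z)) := by
  rw [laplacian_comp_real ((contDiff_softCap m).contDiffAt.of_le ENat.LEInfty.out) ha]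
  have hconcave : deriv (deriv (softCap m)) (a z) * ‖fderiv ℝ a z‖ ^ 2 ≤ 0 :=
    mul_nonpos_of_nonpos_of_nonneg (deriv_deriv_softCap_nonpos m _) (sq_nonneg _)
  suffices hfirst : deriv (softCap m) (a z) * Δ a z ≤
      M * Real.exp 2 * Real.exp (2 * softCap m (a z)) by linarith
  have hderiv : deriv (softCap m) (a z) = 1 - Real.smoothTransition (a z - m) := by
    rw [deriv_softCap]
  rcases le_total 1 (a z - m) with h | h
  · rw [hderiv, Real.smoothTransition.one_of_one_le h, sub_self, zero_mul]
    positivity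
  · have hcap : a z - 1 ≤ softCap m (a z) :=
      (le_min (by linarith) (by linarith)).trans (min_le_softCap m (a z))
    calc deriv (softCap m) (a z) * Δ a z
        ≤ deriv (softCap m) (a z) * (M * Real.exp (2 * a z)) :=
          mul_le_mul_of_nonneg_left hΔ (monotone_softCap m).deriv_nonneg
      _ ≤ 1 * (M * Real.exp (2 * a z)) := by
          gcongr
          rw [hderiv]
          linarith [Real.smoothTransition.nonneg (a z - m)]
      _ ≤ M * Real.exp (2 + 2 * softCap m (a z)) := by
          rw [one_mul]
          gcongr
          linarith
      _ = M * Real.exp 2 * Real.exp (2 * softCap m (a z)) := by rw [Real.exp_add, mul_assoc]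

theorem laplacian_cuspTruncation_le (hM : 0 ≤ M) (h₀ : Tendsto a (𝓝[≠] 0) atTop)
    (ha : z ≠ 0 → ContDiffAt ℝ 2 a z) (hΔ : z ≠ 0 → Δ a z ≤ M * Real.exp (2 * a z)) (m : ℝ) :
    Δ (cuspTruncation a m) z ≤ M * Real.exp 2 * Real.exp (2 * cuspTruncation a m z) := by
  rcases eq_or_ne z 0 with rfl | hz
  · rw [(laplacian_congr_nhds (cuspTruncation_eventuallyEq_const h₀ m)).eq_of_nhds]
    simp only [laplacian_const, Pi.zero_apply]
    positivity
  · rw [(laplacian_congr_nhds (cuspTruncation_eventuallyEq_comp a m hz)).eq_of_nhds,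
      cuspTruncation_of_ne a m hz]
    exact laplacian_softCap_comp_le hM (ha hz) (hΔ hz) m

end CurvatureBound

section TruncatingCusps

variable {a : ℂ → ℝ}

lemma exists_truncation_heights (ha : ContinuousOn a (closedBall 0 1 \ {0})) :
    ∃ m : ℕ → ℝ, Monotone m ∧ (∀ k : ℕ, (k : ℝ) ≤ m k) ∧
      ∀ k : ℕ, 1 ≤ k → ∀ z ∈ closedBall (0 : ℂ) 1 \ ball 0 (1 / k), a z ≤ m k := by
  have hbdd (k : ℕ) : ∃ B, 1 ≤ k → ∀ z ∈ closedBall (0 : ℂ) 1 \ ball 0 (1 / k), a z ≤ B := by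
    rcases k.eq_zero_or_pos with rfl | hk
    · exact ⟨0, fun h ↦ absurd h (by norm_num)⟩
    · have hsub : closedBall (0 : ℂ) 1 \ ball 0 (1 / k) ⊆ closedBall 0 1 \ {0} :=
        sdiff_subset_sdiff_right (singleton_subset_iff.2 (mem_ball_self (by positivity)))
      obtain ⟨B, hB⟩ := ((isCompact_closedBall (0 : ℂ) 1).diff isOpen_ball).bddAbove_image
        (ha.mono hsub)
      exact ⟨B, fun _ z hz ↦ hB (mem_image_of_mem a hz)⟩
  choose B hB using hbdd
  have hle (k : ℕ) := le_partialSups (fun k : ℕ ↦ max (k : ℝ) (B k)) k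
  exact ⟨partialSups fun k : ℕ ↦ max (k : ℝ) (B k), (partialSups _).monotone,
    fun k ↦ (le_max_left _ _).trans (hle k),
    fun k hk z hz ↦ (hB k hk z hz).trans ((le_max_right _ _).trans (hle k))⟩

lemma eventually_forall_ball_le_cuspTruncation (ha : Tendsto a (𝓝[≠] 0) atTop) {m : ℕ → ℝ}
    (hm : Tendsto m atTop atTop) (R : ℝ) :
    ∀ᶠ k : ℕ in atTop, ∀ z ∈ ball (0 : ℂ) (1 / k), R ≤ cuspTruncation a (m k) z := by
  obtain ⟨δ, hδ, hball⟩ := Metric.eventually_nhds_iff_ball.1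
    (eventually_nhdsWithin_iff.1 (ha.eventually_ge_atTop R))
  filter_upwards [hm.eventually_ge_atTop R,
    tendsto_one_div_atTop_nhds_zero_nat.eventually (gt_mem_nhds hδ)] with k hk hkδ z hz
  exact le_cuspTruncation hk fun hz₀ ↦ hball z (ball_subset_ball hkδ.le hz) hz₀

lemma integrableOn_exp_comp_segment {c : ℝ} (hc : 0 < c)
    (h : IntegrableOn (fun t : ℝ ↦ Real.exp (a t)) (Ioc 0 c)) :
    IntegrableOn (fun s : ℝ ↦ Real.exp (a (c * (1 - s) : ℝ)) * c) (Ioo 0 1) := by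
  have h₁ : IntervalIntegrable (fun s : ℝ ↦ Real.exp (a (c * s : ℝ))) volume 0 1 := by
    simpa [hc.ne'] using
      ((intervalIntegrable_iff_integrableOn_Ioc_of_le hc.le).2 h).comp_mul_left (c := c)
  have h₂ := ((h₁.comp_sub_left 1).mul_const c).symm
  simp only [sub_zero, sub_self] at h₂
  exact ((intervalIntegrable_iff_integrableOn_Ioc_of_le zero_le_one).1 h₂).mono_set
    Ioo_subset_Ioc_self

lemma not_integrableAtFilter_exp_of_complete
    (hcomplete : ∀ γ : ℝ → ℂ, ContDiffOn ℝ ∞ γ (Ico 0 1) →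
      (∀ s ∈ Ico (0 : ℝ) 1, γ s ∈ ball (0 : ℂ) 1 \ {0}) → Tendsto γ (𝓝[<] 1) (𝓝 0) →
      ∫⁻ s in Ioo (0 : ℝ) 1, ENNReal.ofReal (Real.exp (a (γ s)) * ‖deriv γ s‖) = ⊤) :
    ¬IntegrableAtFilter (fun t : ℝ ↦ Real.exp (a t)) (𝓝[>] 0) := by
  rintro ⟨S, hS, hint⟩
  obtain ⟨ε, hε : 0 < ε, hεS⟩ := mem_nhdsGT_iff_exists_Ioc_subset.1 hS
  obtain ⟨c, hc, hcε⟩ := exists_between (lt_min hε one_pos)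
  have hderiv (s : ℝ) : ‖deriv (fun s : ℝ ↦ ((c * (1 - s) : ℝ) : ℂ)) s‖ = c := by
    have : HasDerivAt (fun s : ℝ ↦ c * (1 - s)) (c * -1) s :=
      ((hasDerivAt_id s).const_sub 1).const_mul c
    rw [this.ofReal_comp.deriv]
    simp [abs_of_pos hc]
  have htop := hcomplete (fun s ↦ ((c * (1 - s) : ℝ) : ℂ)) ?_ ?_ ?_
  · simp only [hderiv] at htop
    exact (integrableOn_exp_comp_segment hc (hint.mono_set
      ((Ioc_subset_Ioc_right (hcε.le.trans (min_le_left _ _))).trans hεS))).lintegral_lt_top.ne htop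
  · exact (Complex.ofRealCLM.contDiff.comp
      (contDiff_const.mul (contDiff_const.sub contDiff_id))).contDiffOn
  · rintro s ⟨hs₀, hs₁⟩
    have hpos : 0 < c * (1 - s) := mul_pos hc (by linarith)
    refine ⟨?_, Complex.ofReal_ne_zero.2 hpos.ne'⟩
    rw [mem_ball_zero_iff, Complex.norm_of_nonneg hpos.le]
    nlinarith [hcε.trans_le (min_le_right ε 1)]
  · exact (Continuous.tendsto' (by fun_prop) 1 0 (by simp)).mono_left nhdsWithin_le_nhds

end TruncatingCusps

theorem stmt5_general (M : ℝ) (a : ℂ → ℝ) (U : Set ℂ) (hU : IsOpen U)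
    (hUsub : closedBall (0 : ℂ) 1 \ {0} ⊆ U)
    (ha : ContDiffOn ℝ (⊤ : ℕ∞) a U)
    (hK₁ : ∀ z ∈ closedBall (0 : ℂ) 1 \ {0}, Real.exp (2 * a z) ≤ lap a z)
    (hK₂ : ∀ z ∈ closedBall (0 : ℂ) 1 \ {0}, lap a z ≤ M * Real.exp (2 * a z))
    (hray : ¬IntegrableAtFilter (fun t : ℝ ↦ Real.exp (a t)) (𝓝[>] 0)) :
    ∃ u : ℕ → ℂ → ℝ, ∃ C : ℝ,
      (∀ k : ℕ, 1 ≤ k → ContDiffOn ℝ (⊤ : ℕ∞) (u k) (ball (0 : ℂ) 1)) ∧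
      (∀ k : ℕ, 1 ≤ k → ∀ z ∈ ball (0 : ℂ) 1, u k z ≤ u (k + 1) z) ∧
      (∀ k : ℕ, 1 ≤ k → ∀ z ∈ ball (0 : ℂ) 1 \ ball (0 : ℂ) (1 / k), u k z = a z) ∧
      (∀ k : ℕ, 1 ≤ k → ∀ z ∈ ball (0 : ℂ) 1 \ {0}, u k z ≤ a z) ∧
      (∀ R : ℝ, ∃ N : ℕ, ∀ k : ℕ, N ≤ k → ∀ z ∈ ball (0 : ℂ) (1 / k), R ≤ u k z) ∧
      (∀ k : ℕ, 1 ≤ k → ∀ z ∈ ball (0 : ℂ) 1,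
        -C ≤ -(Real.exp (-2 * u k z) * lap (u k) z)) := by
  have hclosed {z : ℂ} (hz : z ∈ ball (0 : ℂ) 1) (hz₀ : z ≠ 0) : z ∈ closedBall (0 : ℂ) 1 \ {0} :=
    ⟨ball_subset_closedBall hz, hz₀⟩
  have hat {z : ℂ} (hz : z ∈ ball (0 : ℂ) 1) (hz₀ : z ≠ 0) : ContDiffAt ℝ ∞ a z :=
    ha.contDiffAt (hU.mem_nhds (hUsub (hclosed hz hz₀)))
  simp only [lap_eq_laplacian] at hK₁ hK₂ ⊢
  have hM : 0 ≤ M := by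
    have h₁ := hclosed (z := 1 / 2) (by norm_num) (by norm_num)
    nlinarith [(hK₁ _ h₁).trans (hK₂ _ h₁), Real.exp_pos (2 * a (1 / 2))]
  have hpole : Tendsto a (𝓝[≠] 0) atTop := tendsto_atTop_of_exp_le_laplacian
    (fun z hz ↦ ((hat hz.1 hz.2).of_le ENat.LEInfty.out).contDiffWithinAt)
    (fun z hz ↦ ⟨hK₁ z (hclosed hz.1 hz.2), hK₂ z (hclosed hz.1 hz.2)⟩) hray
  obtain ⟨m, hm, hkm, ham⟩ := exists_truncation_heights (ha.continuousOn.mono hUsub)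
  refine ⟨fun k ↦ cuspTruncation a (m k), M * Real.exp 2, fun k _ z hz ↦ ?_, fun k _ z _ ↦ ?_,
    fun k hk z hz ↦ ?_, fun k _ z hz ↦ cuspTruncation_le_self (m k) hz.2, fun R ↦ ?_,
    fun k _ z hz ↦ neg_le_neg ?_⟩
  · exact (contDiffAt_cuspTruncation hpole (hat hz) (m k)).contDiffWithinAt
  · exact monotone_cuspTruncation a (hm k.le_succ) z
  · have hz₀ : z ≠ 0 := by
      rintro rfl
      exact hz.2 (mem_ball_self (by positivity))
    exact cuspTruncation_eq_self hz₀ (ham k hk z ⟨ball_subset_closedBall hz.1, hz.2⟩)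
  · exact eventually_atTop.1 (eventually_forall_ball_le_cuspTruncation hpole
      (tendsto_atTop_mono hkm tendsto_natCast_atTop_atTop) R)
  · have hΔ := laplacian_cuspTruncation_le hM hpole (fun h ↦ (hat hz h).of_le ENat.LEInfty.out)
      (fun h ↦ hK₂ z (hclosed hz h)) (m k)
    rw [neg_mul, Real.exp_neg]
    exact (inv_mul_le_iff₀' (Real.exp_pos _)).2 hΔ

/-- truncating cusps: given a conformal factor `a`, smooth on a neighbourhood
`U` of the closed punctured unit disc, with Gauss curvature in `[-M,-1]` there and complete
at the origin, there is an increasing sequence of smooth conformal factors `u k` on `D`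
with: (i) `u k = a` outside `D_{1/k}`; (ii) `u k ≤ a` on `D \ {0}`;
(iii) `inf_{D_{1/k}} u k → ∞`; (iv) the Gauss curvatures `-e^{-2 u k} Δ(u k)` are bounded
below by `-C` uniformly in `k`. -/
theorem stmt5 (M : ℝ) (hM : 1 ≤ M) (a : ℂ → ℝ) (U : Set ℂ) (hU : IsOpen U)
    (hUsub : closedBall (0:ℂ) 1 \ {0} ⊆ U)
    (ha : ContDiffOn ℝ (⊤ : ℕ∞) a U)
    (hK₁ : ∀ z ∈ closedBall (0:ℂ) 1 \ {0}, Real.exp (2 * a z) ≤ lap a z)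
    (hK₂ : ∀ z ∈ closedBall (0:ℂ) 1 \ {0}, lap a z ≤ M * Real.exp (2 * a z))
    (hcomplete : ∀ γ : ℝ → ℂ, ContDiffOn ℝ (⊤ : ℕ∞) γ (Ico (0:ℝ) 1) →
      (∀ s ∈ Ico (0:ℝ) 1, γ s ∈ ball (0:ℂ) 1 \ {0}) →
      Tendsto γ (nhdsWithin 1 (Iio 1)) (nhds 0) →
      ∫⁻ s in Ioo (0:ℝ) 1, ENNReal.ofReal (Real.exp (a (γ s)) * ‖deriv γ s‖) = ⊤) :
    ∃ u : ℕ → ℂ → ℝ, ∃ C : ℝ,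
      (∀ k : ℕ, 1 ≤ k → ContDiffOn ℝ (⊤ : ℕ∞) (u k) (ball (0:ℂ) 1)) ∧
      (∀ k : ℕ, 1 ≤ k → ∀ z ∈ ball (0:ℂ) 1, u k z ≤ u (k+1) z) ∧
      (∀ k : ℕ, 1 ≤ k → ∀ z ∈ ball (0:ℂ) 1 \ ball (0:ℂ) (1/k), u k z = a z) ∧
      (∀ k : ℕ, 1 ≤ k → ∀ z ∈ ball (0:ℂ) 1 \ {0}, u k z ≤ a z) ∧
      (∀ R : ℝ, ∃ N : ℕ, ∀ k : ℕ, N ≤ k → ∀ z ∈ ball (0:ℂ) (1/k), R ≤ u k z) ∧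
      (∀ k : ℕ, 1 ≤ k → ∀ z ∈ ball (0:ℂ) 1,
        -C ≤ -(Real.exp (-2 * u k z) * lap (u k) z)) :=
  stmt5_general M a U hU hUsub ha hK₁ hK₂ (not_integrableAtFilter_exp_of_complete hcomplete)
end

section
/- Let ε > 0, M ∈ ℝ, t₀ > 0, and let u be smooth on a neighbourhood of D̄_ε × (0,t₀), satisfying ∂u/∂t = e^{−2u}Δu there, with u ≥ M + 1 on ∂D_ε × (0,t₀). Suppose in addition that ∫_{D_ε} (M − u(z,t))₊ dz → 0 as t ↓ 0, where x₊ = max{x,0}. Then u(z,t) ≥ M for all z ∈ D_ε and all t ∈ (0,t₀). -/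
open Complex Metric Set Filter

/-!
Test the equation `∂u/∂t = a(u) Δu` against `ψ(u) / a(u)`, where `ψ` is a bounded nondecreasing
cutoff, negative below `M` and flat zero above. If `φ` is the primitive of `ψ / a` vanishing at
`M`, then `d/dt ∫ φ(u) = ∫ ψ(u) Δu = -∫ ψ'(u) |∇u|² ≤ 0`: there is no boundary term because
`u ≥ M` on the boundary, where `ψ` and `ψ'` vanish. A lower bound on `a` below `M` makes `φ(u)`
at most a multiple of `(M - u)₊`, so the nonnegative quantity `∫ φ(u)` is nonincreasing and tends
to `0` as `t ↓ 0`. Hence it vanishes identically, and `φ > 0` below `M` forces `u ≥ M`.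
-/

open MeasureTheory Topology Laplacian InnerProductSpace Function

section Indicator

variable {𝕜 E F : Type*} [NontriviallyNormedField 𝕜] [NormedAddCommGroup E] [NormedSpace 𝕜 E]
  [NormedAddCommGroup F] [NormedSpace 𝕜 F] {f : E → F} {f' : E → E →L[𝕜] F} {s : Set E} {x : E}

lemma hasFDerivAt_indicator_of_eq_zero (hf : HasFDerivAt f (0 : E →L[𝕜] F) x) (hfx : f x = 0) :
    HasFDerivAt (s.indicator f) (0 : E →L[𝕜] F) x := by
  refine .of_isLittleO ((Asymptotics.isBigO_of_le _ fun y => ?_).trans_isLittleO hf.isLittleO)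
  simpa [indicator_apply_eq_zero.2 fun _ => hfx, hfx] using norm_indicator_le_norm_self f y

lemma hasFDerivAt_indicator (hs : IsOpen s) (hf : ∀ y ∈ closure s, HasFDerivAt f (f' y) y)
    (hf₀ : ∀ y ∈ frontier s, f y = 0) (hf'₀ : ∀ y ∈ frontier s, f' y = 0) :
    HasFDerivAt (s.indicator f) (s.indicator f' x) x := by
  by_cases hxs : x ∈ s
  · rw [indicator_of_mem hxs]
    exact (hf x (subset_closure hxs)).congr_of_eventuallyEq
      (eqOn_indicator.eventuallyEq_of_mem (hs.mem_nhds hxs))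
  rw [indicator_of_notMem hxs]
  by_cases hxc : x ∈ closure s
  · have hxf : x ∈ frontier s := by rw [hs.frontier_eq]; exact ⟨hxc, hxs⟩
    exact hasFDerivAt_indicator_of_eq_zero (hf'₀ x hxf ▸ hf x hxc) (hf₀ x hxf)
  · refine (hasFDerivAt_const 0 x).congr_of_eventuallyEq ?_
    filter_upwards [isClosed_closure.isOpen_compl.mem_nhds hxc] with y hy
    exact indicator_of_notMem (fun hys => hy (subset_closure hys)) f

end Indicator

section ParametricIntegral

lemma integrableOn_of_continuousOn_closure {X G : Type*} [TopologicalSpace X] [T2Space X]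
    [MeasurableSpace X] [OpensMeasurableSpace X] [NormedAddCommGroup G]
    {Ω : Set X} {μ : Measure X} [IsFiniteMeasureOnCompacts μ] {f : X → G}
    (hΩ : IsCompact (closure Ω)) (hf : ContinuousOn f (closure Ω)) : IntegrableOn f Ω μ :=
  (hf.integrableOn_compact hΩ).mono_set subset_closure

variable {E G : Type*} [NormedAddCommGroup E] [NormedSpace ℝ E] [NormedAddCommGroup G]
  [NormedSpace ℝ G] {F : E → ℝ → G} {z : E} {t : ℝ}

lemma hasDerivAt_of_contDiffAt_uncurry (hF : ContDiffAt ℝ 1 (uncurry F) (z, t)) :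
    HasDerivAt (F z) (fderiv ℝ (uncurry F) (z, t) (0, 1)) t :=
  (hF.differentiableAt one_ne_zero).hasFDerivAt.comp_hasDerivAt t
    ((hasDerivAt_const t z).prodMk (hasDerivAt_id t))

variable [MeasurableSpace E] [BorelSpace E] {Ω : Set E} {μ : Measure E}
  [IsFiniteMeasureOnCompacts μ]

lemma hasDerivAt_setIntegral_of_contDiffAt (hΩm : MeasurableSet Ω) (hΩ : IsCompact (closure Ω))
    (hF : ∀ z ∈ closure Ω, ContDiffAt ℝ 1 (uncurry F) (z, t)) :
    HasDerivAt (fun s => ∫ z in Ω, F z s ∂μ) (∫ z in Ω, deriv (F z) t ∂μ) t := by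
  have hcont : ContinuousOn (fun z => fderiv ℝ (uncurry F) (z, t)) (closure Ω) := fun z hz =>
    ((hF z hz).continuousAt_fderiv one_ne_zero).comp_continuousWithinAt (f := fun w => (w, t))
      (by fun_prop)
  obtain ⟨C, hC⟩ := hΩ.exists_bound_of_continuousOn hcont
  have hnear : ∀ᶠ s in 𝓝 t, ∀ z ∈ closure Ω,
      ContDiffAt ℝ 1 (uncurry F) (z, s) ∧ ‖fderiv ℝ (uncurry F) (z, s)‖ < C + 1 := by
    refine hΩ.eventually_forall_of_forall_eventually
      (P := fun s z => ContDiffAt ℝ 1 (uncurry F) (z, s) ∧ _) fun z hz => ?_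
    have hswap : Tendsto Prod.swap (𝓝 (t, z)) (𝓝 (z, t)) := continuous_swap.tendsto _
    exact hswap.eventually (((hF z hz).eventually (by simp)).and
      (((hF z hz).continuousAt_fderiv one_ne_zero).norm.eventually_lt_const
        ((hC z hz).trans_lt (lt_add_one C))))
  have hint {s : ℝ} (h : ∀ z ∈ closure Ω, ContDiffAt ℝ 1 (uncurry F) (z, s)) :
      IntegrableOn (fun z => F z s) Ω μ :=
    integrableOn_of_continuousOn_closure hΩ fun z hz =>
      (h z hz).continuousAt.comp_continuousWithinAt (f := fun w => (w, s)) (by fun_prop)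
  have hint' : IntegrableOn (fun z => fderiv ℝ (uncurry F) (z, t) (0, 1)) Ω μ :=
    integrableOn_of_continuousOn_closure hΩ (hcont.clm_apply continuousOn_const)
  rw [setIntegral_congr_fun hΩm fun z hz =>
    (hasDerivAt_of_contDiffAt_uncurry (hF z (subset_closure hz))).deriv]
  refine (hasDerivAt_integral_of_dominated_loc_of_deriv_le hnear
    (F := fun s z => F z s) (bound := fun _ => (C + 1) * ‖((0 : E), (1 : ℝ))‖)
    (F' := fun s z => fderiv ℝ (uncurry F) (z, s) (0, 1)) ?_ (hint hF)
    hint'.aestronglyMeasurable ?_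
    (integrableOn_of_continuousOn_closure hΩ continuousOn_const) ?_).2
  · filter_upwards [hnear] with s hs
    exact (hint fun z hz => (hs z hz).1).aestronglyMeasurable
  · filter_upwards [ae_restrict_mem hΩm] with z hz s hs
    exact ContinuousLinearMap.le_of_opNorm_le _ (hs z (subset_closure hz)).2.le _
  · filter_upwards [ae_restrict_mem hΩm] with z hz s hs
    exact hasDerivAt_of_contDiffAt_uncurry (hs z (subset_closure hz)).1

end ParametricIntegral

section Green

variable {E : Type*} [NormedAddCommGroup E] [MeasurableSpace E] [BorelSpace E] {Ω : Set E}
  {μ : Measure E}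

lemma setIntegral_mul_fderiv_eq_neg_fderiv_mul [NormedSpace ℝ E] [FiniteDimensional ℝ E]
    [μ.IsAddHaarMeasure] (hΩo : IsOpen Ω) (hΩb : Bornology.IsBounded Ω) {f g : E → ℝ}
    (hf : ∀ z ∈ closure Ω, ContDiffAt ℝ 1 f z) (hg : ∀ z ∈ closure Ω, ContDiffAt ℝ 1 g z)
    (hf₀ : ∀ z ∈ frontier Ω, f z = 0) (hf'₀ : ∀ z ∈ frontier Ω, fderiv ℝ f z = 0) (a : E) :
    ∫ z in Ω, f z * fderiv ℝ g z a ∂μ = -∫ z in Ω, fderiv ℝ f z a * g z ∂μ := by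
  have : ProperSpace E := FiniteDimensional.proper_real E
  have hcont {h : E → ℝ} (hh : ∀ z ∈ closure Ω, ContDiffAt ℝ 1 h z) : ContinuousOn h (closure Ω) :=
    fun z hz => (hh z hz).continuousAt.continuousWithinAt
  have hcont' {h : E → ℝ} (hh : ∀ z ∈ closure Ω, ContDiffAt ℝ 1 h z) :
      ContinuousOn (fun z => fderiv ℝ h z a) (closure Ω) := fun z hz =>
    (((hh z hz).continuousAt_fderiv one_ne_zero).clm_apply continuousAt_const).continuousWithinAt
  have hint {h : E → ℝ} (hh : ContinuousOn h (closure Ω)) : Integrable (Ω.indicator h) μ :=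
    (integrable_indicator_iff hΩo.measurableSet).2
      (integrableOn_of_continuousOn_closure hΩb.isCompact_closure hh)
  have hderiv (z : E) : HasFDerivAt (Ω.indicator f) (Ω.indicator (fderiv ℝ f) z) z :=
    hasFDerivAt_indicator hΩo
      (fun y hy => ((hf y hy).differentiableAt one_ne_zero).hasFDerivAt) hf₀ hf'₀
  have hleft : (fun z => Ω.indicator f z * fderiv ℝ g z a) =
      Ω.indicator fun z => f z * fderiv ℝ g z a :=
    funext fun z => (indicator_mul_left Ω f fun w => fderiv ℝ g w a).symm
  have hright : (fun z => fderiv ℝ (Ω.indicator f) z a * g z) =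
      Ω.indicator fun z => fderiv ℝ f z a * g z := by
    funext z
    rw [(hderiv z).fderiv]
    by_cases hz : z ∈ Ω <;> simp [hz]
  have hparts := integral_mul_fderiv_eq_neg_fderiv_mul_of_integrable (μ := μ)
    (f := Ω.indicator f) (g := g) (v := a)
    (hright ▸ hint ((hcont' hf).mul (hcont hg))) (hleft ▸ hint ((hcont hf).mul (hcont' hg)))
    ((hint ((hcont hf).mul (hcont hg))).congr (.of_forall fun z => indicator_mul_left Ω f g))
    (fun z _ => (hderiv z).differentiableAt)
    (fun z hz => (hg z (closure_mono support_indicator_subset hz)).differentiableAt one_ne_zero)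
  rwa [hleft, hright, integral_indicator hΩo.measurableSet,
    integral_indicator hΩo.measurableSet] at hparts

variable {v : E → ℝ} {ψ : ℝ → ℝ}

lemma setIntegral_comp_mul_iteratedFDeriv_two [NormedSpace ℝ E] [FiniteDimensional ℝ E]
    [μ.IsAddHaarMeasure] (hΩo : IsOpen Ω) (hΩb : Bornology.IsBounded Ω)
    (hv : ∀ z ∈ closure Ω, ContDiffAt ℝ 2 v z) (hψ : ContDiff ℝ 1 ψ)
    (hψ₀ : ∀ z ∈ frontier Ω, ψ (v z) = 0) (hψ'₀ : ∀ z ∈ frontier Ω, deriv ψ (v z) = 0) (a : E) :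
    ∫ z in Ω, ψ (v z) * iteratedFDeriv ℝ 2 v z ![a, a] ∂μ =
      -∫ z in Ω, deriv ψ (v z) * fderiv ℝ v z a ^ 2 ∂μ := by
  have hv' (z : E) (hz : z ∈ closure Ω) : ContDiffAt ℝ 1 (fderiv ℝ v) z :=
    (hv z hz).fderiv_right (by norm_num)
  have hfderiv_comp (z : E) (hz : z ∈ closure Ω) :
      fderiv ℝ (fun w => ψ (v w)) z = deriv ψ (v z) • fderiv ℝ v z :=
    ((hψ.differentiable one_ne_zero _).hasDerivAt.comp_hasFDerivAt z
      ((hv z hz).differentiableAt two_ne_zero).hasFDerivAt).fderiv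
  have hfderiv_apply (z : E) (hz : z ∈ closure Ω) :
      fderiv ℝ (fun w => fderiv ℝ v w a) z a = iteratedFDeriv ℝ 2 v z ![a, a] := by
    rw [fderiv_clm_apply ((hv' z hz).differentiableAt one_ne_zero) (by fun_prop),
      iteratedFDeriv_two_apply]
    simp
  calc ∫ z in Ω, ψ (v z) * iteratedFDeriv ℝ 2 v z ![a, a] ∂μ
      = ∫ z in Ω, ψ (v z) * fderiv ℝ (fun w => fderiv ℝ v w a) z a ∂μ :=
        setIntegral_congr_fun hΩo.measurableSet fun z hz => by
          simp only [hfderiv_apply z (subset_closure hz)]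
    _ = -∫ z in Ω, fderiv ℝ (fun w => ψ (v w)) z a * fderiv ℝ v z a ∂μ :=
        setIntegral_mul_fderiv_eq_neg_fderiv_mul hΩo hΩb (f := fun w => ψ (v w))
          (fun z hz => hψ.contDiffAt.comp z ((hv z hz).of_le one_le_two))
          (fun z hz => (hv' z hz).clm_apply contDiffAt_const) hψ₀
          (fun z hz => by
            rw [hfderiv_comp z (frontier_subset_closure hz), hψ'₀ z hz, zero_smul]) a
    _ = -∫ z in Ω, deriv ψ (v z) * fderiv ℝ v z a ^ 2 ∂μ := by
        congr 1
        refine setIntegral_congr_fun hΩo.measurableSet fun z hz => ?_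
        simp only [hfderiv_comp z (subset_closure hz), smul_apply, smul_eq_mul]
        ring

lemma setIntegral_comp_mul_laplacian_nonpos [InnerProductSpace ℝ E] [FiniteDimensional ℝ E]
    [μ.IsAddHaarMeasure] (hΩo : IsOpen Ω) (hΩb : Bornology.IsBounded Ω)
    (hv : ∀ z ∈ closure Ω, ContDiffAt ℝ 2 v z) (hψ : ContDiff ℝ 1 ψ) (hψmono : Monotone ψ)
    (hψ₀ : ∀ z ∈ frontier Ω, ψ (v z) = 0) (hψ'₀ : ∀ z ∈ frontier Ω, deriv ψ (v z) = 0) :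
    ∫ z in Ω, ψ (v z) * Δ v z ∂μ ≤ 0 := by
  have : ProperSpace E := FiniteDimensional.proper_real E
  have hint (a : E) :
      Integrable (fun z => ψ (v z) * iteratedFDeriv ℝ 2 v z ![a, a]) (μ.restrict Ω) := by
    refine integrableOn_of_continuousOn_closure hΩb.isCompact_closure fun z hz => ?_
    have hψv : ContinuousAt (fun w => ψ (v w)) z :=
      hψ.continuous.continuousAt.comp (hv z hz).continuousAt
    have hv' : ContDiffAt ℝ 1 (fderiv ℝ v) z := (hv z hz).fderiv_right (by norm_num)
    simp only [iteratedFDeriv_two_apply]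
    exact (hψv.mul (((hv'.continuousAt_fderiv one_ne_zero).clm_apply
      continuousAt_const).clm_apply continuousAt_const)).continuousWithinAt
  simp only [laplacian_eq_iteratedFDeriv_stdOrthonormalBasis, Finset.mul_sum]
  rw [integral_finsetSum _ fun i _ => hint _]
  refine Finset.sum_nonpos fun i _ => ?_
  rw [setIntegral_comp_mul_iteratedFDeriv_two hΩo hΩb hv hψ hψ₀ hψ'₀, neg_nonpos]
  exact integral_nonneg fun z => mul_nonneg hψmono.deriv_nonneg (sq_nonneg _)

end Green

section DeficitDensity

/-- The monotone cutoff `ψ(s) = -η(M - s)`, with `η` the smooth transition from `0` to `1`: it is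
negative exactly below the level `M`, and is the function against which `Δu` is tested. -/
noncomputable def deficitCutoff (M s : ℝ) : ℝ :=
  -Real.smoothTransition (M - s)

/-- The primitive `φ` of `ψ / a` with `φ(M) = 0`, where `ψ = deficitCutoff M`; its integral is the
Lyapunov functional of `∂u/∂t = a(u) Δu`. The coefficient is evaluated at `min r M` because `ψ`
vanishes above `M`, where nothing is assumed about `a`. -/
noncomputable def deficitDensity (a : ℝ → ℝ) (M s : ℝ) : ℝ :=
  ∫ r in M..s, deficitCutoff M r / a (min r M)

variable {a : ℝ → ℝ} {M s c : ℝ}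

lemma deficitCutoff_nonpos : deficitCutoff M s ≤ 0 :=
  neg_nonpos.2 (Real.smoothTransition.nonneg _)

lemma deficitCutoff_neg (hs : s < M) : deficitCutoff M s < 0 :=
  neg_neg_of_pos (Real.smoothTransition.pos_of_pos (sub_pos.2 hs))

lemma deficitCutoff_eq_zero (hs : M ≤ s) : deficitCutoff M s = 0 :=
  neg_eq_zero.2 (Real.smoothTransition.zero_of_nonpos (sub_nonpos.2 hs))

lemma neg_one_le_deficitCutoff : -1 ≤ deficitCutoff M s :=
  neg_le_neg (Real.smoothTransition.le_one _)

lemma monotone_deficitCutoff : Monotone (deficitCutoff M) := fun _ _ h =>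
  neg_le_neg (Real.smoothTransition.monotone (sub_le_sub_left h M))

lemma contDiff_deficitCutoff : ContDiff ℝ 1 (deficitCutoff M) :=
  (Real.smoothTransition.contDiff.comp (contDiff_const.sub contDiff_id)).neg

lemma deriv_deficitCutoff_eq_zero (hs : M ≤ s) : deriv (deficitCutoff M) s = 0 :=
  IsLocalMax.deriv_eq_zero <| .of_forall fun _ =>
    deficitCutoff_nonpos.trans_eq (deficitCutoff_eq_zero hs).symm

lemma deficitDensity_eq_zero (hs : M ≤ s) : deficitDensity a M s = 0 := by
  refine intervalIntegral.integral_zero_ae (.of_forall fun r hr => ?_)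
  rw [uIoc_of_le hs] at hr
  rw [deficitCutoff_eq_zero hr.1.le, zero_div]

variable (ha : ContinuousOn a (Iic M)) (hc : 0 < c) (hac : ∀ r ≤ M, c ≤ a r)

include ha hc hac

lemma continuous_deficitDensity_integrand :
    Continuous fun r => deficitCutoff M r / a (min r M) :=
  contDiff_deficitCutoff.continuous.div
    (ha.comp_continuous (by fun_prop) fun r => min_le_right r M)
    fun r => (hc.trans_le (hac _ (min_le_right r M))).ne'

lemma hasDerivAt_deficitDensity :
    HasDerivAt (deficitDensity a M) (deficitCutoff M s / a (min s M)) s := by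
  have hcont := continuous_deficitDensity_integrand ha hc hac
  exact intervalIntegral.integral_hasDerivAt_right (hcont.intervalIntegrable M s)
    hcont.aestronglyMeasurable.stronglyMeasurableAtFilter hcont.continuousAt

lemma deriv_deficitDensity_mul : deriv (deficitDensity a M) s * a s = deficitCutoff M s := by
  rw [(hasDerivAt_deficitDensity ha hc hac).deriv]
  rcases le_total s M with hs | hs
  · rw [min_eq_left hs, div_mul_cancel₀ _ (hc.trans_le (hac s hs)).ne']
  · rw [deficitCutoff_eq_zero hs, zero_div, zero_mul]

lemma contDiff_deficitDensity : ContDiff ℝ 1 (deficitDensity a M) := by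
  have hderiv (s : ℝ) := hasDerivAt_deficitDensity (s := s) ha hc hac
  refine contDiff_one_iff_deriv.2 ⟨fun s => (hderiv s).differentiableAt, ?_⟩
  rw [funext fun s => (hderiv s).deriv]
  exact continuous_deficitDensity_integrand ha hc hac

lemma deficitDensity_pos (hs : s < M) : 0 < deficitDensity a M s := by
  rw [deficitDensity, intervalIntegral.integral_symm, ← intervalIntegral.integral_neg]
  exact intervalIntegral.intervalIntegral_pos_of_pos_on
    ((continuous_deficitDensity_integrand ha hc hac).neg.intervalIntegrable s M)
    (fun r hr => neg_pos.2 (div_neg_of_neg_of_pos (deficitCutoff_neg hr.2)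
      (hc.trans_le (hac _ (min_le_right r M))))) hs

lemma deficitDensity_nonneg : 0 ≤ deficitDensity a M s := by
  rcases lt_or_ge s M with hs | hs
  · exact (deficitDensity_pos ha hc hac hs).le
  · exact (deficitDensity_eq_zero hs).ge

lemma deficitDensity_le : deficitDensity a M s ≤ c⁻¹ * max (M - s) 0 := by
  rcases le_total s M with hs | hs
  · have hle (r : ℝ) : -(deficitCutoff M r / a (min r M)) ≤ c⁻¹ := by
      rw [← neg_div, ← one_div]
      exact div_le_div₀ zero_le_one (neg_le.1 neg_one_le_deficitCutoff) hc
        (hac _ (min_le_right r M))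
    calc deficitDensity a M s = ∫ r in s..M, -(deficitCutoff M r / a (min r M)) := by
          rw [deficitDensity, intervalIntegral.integral_symm, intervalIntegral.integral_neg]
      _ ≤ ∫ _ in s..M, c⁻¹ := intervalIntegral.integral_mono_on hs
          ((continuous_deficitDensity_integrand ha hc hac).neg.intervalIntegrable s M)
          intervalIntegrable_const fun r _ => hle r
      _ = c⁻¹ * max (M - s) 0 := by
          rw [intervalIntegral.integral_const, smul_eq_mul, max_eq_left (sub_nonneg.2 hs), mul_comm]
  · rw [deficitDensity_eq_zero hs]
    positivity

end DeficitDensity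

section NonlinearDiffusion

variable {E : Type*} [NormedAddCommGroup E] [InnerProductSpace ℝ E] [FiniteDimensional ℝ E]
  [MeasurableSpace E] [BorelSpace E] {μ : Measure E} [μ.IsAddHaarMeasure] {Ω : Set E}
  {a : ℝ → ℝ} {M t₀ : ℝ} {u : E → ℝ → ℝ}

lemma antitoneOn_setIntegral_comp {φ ψ : ℝ → ℝ} (hΩo : IsOpen Ω) (hΩb : Bornology.IsBounded Ω)
    (hu : ∀ z ∈ closure Ω, ∀ t ∈ Ioo 0 t₀, ContDiffAt ℝ 2 (uncurry u) (z, t))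
    (heq : ∀ z ∈ Ω, ∀ t ∈ Ioo 0 t₀, HasDerivAt (u z) (a (u z t) * Δ (fun w => u w t) z) t)
    (hφ : ContDiff ℝ 1 φ) (hφψ : ∀ s, deriv φ s * a s = ψ s) (hψ : ContDiff ℝ 1 ψ)
    (hψmono : Monotone ψ) (hψ₀ : ∀ z ∈ frontier Ω, ∀ t ∈ Ioo 0 t₀, ψ (u z t) = 0)
    (hψ'₀ : ∀ z ∈ frontier Ω, ∀ t ∈ Ioo 0 t₀, deriv ψ (u z t) = 0) :
    AntitoneOn (fun t => ∫ z in Ω, φ (u z t) ∂μ) (Ioo 0 t₀) := by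
  have : ProperSpace E := FiniteDimensional.proper_real E
  have hslice {t : ℝ} (ht : t ∈ Ioo 0 t₀) (z : E) (hz : z ∈ closure Ω) :
      ContDiffAt ℝ 2 (fun w => u w t) z :=
    (hu z hz t ht).comp z (contDiffAt_id.prodMk contDiffAt_const)
  have hderiv {t : ℝ} (ht : t ∈ Ioo 0 t₀) : HasDerivAt (fun s => ∫ z in Ω, φ (u z s) ∂μ)
      (∫ z in Ω, ψ (u z t) * Δ (fun w => u w t) z ∂μ) t := by
    have hchain (z : E) (hz : z ∈ Ω) :
        deriv (fun s => φ (u z s)) t = ψ (u z t) * Δ (fun w => u w t) z := by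
      rw [← hφψ, mul_assoc]
      exact ((hφ.differentiable one_ne_zero _).hasDerivAt.comp t (heq z hz t ht)).deriv
    rw [← setIntegral_congr_fun hΩo.measurableSet hchain]
    exact hasDerivAt_setIntegral_of_contDiffAt hΩo.measurableSet hΩb.isCompact_closure
      fun z hz => hφ.contDiffAt.comp (z, t) ((hu z hz t ht).of_le one_le_two)
  refine antitoneOn_of_deriv_nonpos (convex_Ioo 0 t₀)
    (fun t ht => (hderiv ht).continuousAt.continuousWithinAt) ?_ ?_ <;> rw [interior_Ioo]
  · exact fun t ht => (hderiv ht).differentiableAt.differentiableWithinAt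
  · intro t ht
    rw [(hderiv ht).deriv]
    exact setIntegral_comp_mul_laplacian_nonpos hΩo hΩb (hslice ht) hψ hψmono
      (fun z hz => hψ₀ z hz t ht) fun z hz => hψ'₀ z hz t ht

theorem stmt15_general {c : ℝ} (hΩo : IsOpen Ω) (hΩb : Bornology.IsBounded Ω)
    (ha : ContinuousOn a (Iic M)) (hc : 0 < c) (hac : ∀ s ≤ M, c ≤ a s)
    (hu : ∀ z ∈ closure Ω, ∀ t ∈ Ioo 0 t₀, ContDiffAt ℝ 2 (uncurry u) (z, t))
    (heq : ∀ z ∈ Ω, ∀ t ∈ Ioo 0 t₀, HasDerivAt (u z) (a (u z t) * Δ (fun w => u w t) z) t)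
    (hbdry : ∀ z ∈ frontier Ω, ∀ t ∈ Ioo 0 t₀, M ≤ u z t)
    (hL1 : Tendsto (fun t => ∫ z in Ω, max (M - u z t) 0 ∂μ) (𝓝[>] 0) (𝓝 0)) :
    ∀ z ∈ Ω, ∀ t ∈ Ioo 0 t₀, M ≤ u z t := by
  have : ProperSpace E := FiniteDimensional.proper_real E
  have hφ : ContDiff ℝ 1 (deficitDensity a M) := contDiff_deficitDensity ha hc hac
  have hcomp {f : ℝ → ℝ} (hf : Continuous f) {t : ℝ} (ht : t ∈ Ioo 0 t₀) :
      ContinuousOn (fun z => f (u z t)) (closure Ω) := fun z hz =>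
    hf.continuousAt.comp_continuousWithinAt
      ((hu z hz t ht).continuousAt.comp_continuousWithinAt (f := fun w => (w, t)) (by fun_prop))
  have hint {f : ℝ → ℝ} (hf : Continuous f) {t : ℝ} (ht : t ∈ Ioo 0 t₀) :
      IntegrableOn (fun z => f (u z t)) Ω μ :=
    integrableOn_of_continuousOn_closure hΩb.isCompact_closure (hcomp hf ht)
  have hanti : AntitoneOn (fun t => ∫ z in Ω, deficitDensity a M (u z t) ∂μ) (Ioo 0 t₀) :=
    antitoneOn_setIntegral_comp hΩo hΩb hu heq hφ
      (fun s => deriv_deficitDensity_mul ha hc hac) contDiff_deficitCutoff monotone_deficitCutoff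
      (fun z hz t ht => deficitCutoff_eq_zero (hbdry z hz t ht))
      fun z hz t ht => deriv_deficitCutoff_eq_zero (hbdry z hz t ht)
  have hle {t : ℝ} (ht : t ∈ Ioo 0 t₀) : ∫ z in Ω, deficitDensity a M (u z t) ∂μ ≤
      c⁻¹ * ∫ z in Ω, max (M - u z t) 0 ∂μ := by
    rw [← integral_const_mul]
    exact integral_mono (hint hφ.continuous ht)
      ((hint (f := fun s => max (M - s) 0) (by fun_prop) ht).const_mul _)
      fun z => deficitDensity_le ha hc hac
  intro z hz t ht
  have hzero : ∫ z in Ω, deficitDensity a M (u z t) ∂μ = 0 := by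
    refine le_antisymm (ge_of_tendsto (by simpa using hL1.const_mul c⁻¹) ?_)
      (integral_nonneg fun z => deficitDensity_nonneg ha hc hac)
    filter_upwards [Ioo_mem_nhdsGT ht.1] with s hs
    have hs₀ : s ∈ Ioo 0 t₀ := ⟨hs.1, hs.2.trans ht.2⟩
    exact (hanti hs₀ ht hs.2.le).trans (hle hs₀)
  have hφu : deficitDensity a M (u z t) = 0 :=
    Measure.eqOn_open_of_ae_eq
      ((integral_eq_zero_iff_of_nonneg (fun z => deficitDensity_nonneg ha hc hac)
        (hint hφ.continuous ht)).1 hzero) hΩo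
      ((hcomp hφ.continuous ht).mono subset_closure) continuousOn_const hz
  exact not_lt.1 fun hlt => (deficitDensity_pos ha hc hac hlt).ne' hφu

end NonlinearDiffusion

/-- if `u` solves `∂u/∂t = e^{-2u}Δu` on a neighbourhood of `D̄_ε × (0,t₀)`
with `u ≥ M+1` on `∂D_ε × (0,t₀)`, and the initial deficit `∫_{D_ε} (M - u(·,t))₊`
tends to `0` as `t ↓ 0`, then `u ≥ M` on `D_ε × (0,t₀)`. -/
theorem stmt15 (ε : ℝ) (hε : 0 < ε) (M t₀ : ℝ) (ht₀ : 0 < t₀)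
    (u : ℂ → ℝ → ℝ) (U : Set (ℂ × ℝ)) (hU : IsOpen U)
    (hUsub : closedBall (0:ℂ) ε ×ˢ Ioo (0:ℝ) t₀ ⊆ U)
    (hu : ContDiffOn ℝ (⊤ : ℕ∞) (fun p : ℂ × ℝ => u p.1 p.2) U)
    (heq : ∀ z ∈ closedBall (0:ℂ) ε, ∀ t ∈ Ioo (0:ℝ) t₀,
      HasDerivAt (u z) (Real.exp (-2 * u z t) * lap (fun w => u w t) z) t)
    (hbdry : ∀ z ∈ sphere (0:ℂ) ε, ∀ t ∈ Ioo (0:ℝ) t₀, M + 1 ≤ u z t)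
    (hL1 : Tendsto (fun t => ∫ z in ball (0:ℂ) ε, max (M - u z t) 0)
      (nhdsWithin 0 (Ioi 0)) (nhds 0)) :
    ∀ z ∈ ball (0:ℂ) ε, ∀ t ∈ Ioo (0:ℝ) t₀, M ≤ u z t := by
  rw [← frontier_ball 0 hε.ne'] at hbdry
  rw [← closure_ball 0 hε.ne'] at hUsub heq
  refine stmt15_general isOpen_ball isBounded_ball (a := fun s => Real.exp (-2 * s))
    (by fun_prop) (Real.exp_pos (-2 * M)) (fun s hs => Real.exp_le_exp.2 (by linarith))
    (fun z hz t ht => ?_) (fun z hz t ht => ?_) (fun z hz t ht => ?_) hL1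
  · exact (hu.contDiffAt (hU.mem_nhds (hUsub ⟨hz, ht⟩))).of_le (WithTop.coe_le_coe.2 le_top)
  · rw [laplacian_eq_iteratedFDeriv_complexPlane]
    exact heq z (subset_closure hz) t ht
  · linarith [hbdry z hz t ht]
end
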